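/- arXiv:2106.02265 — 7 statements merged into one kernel-verified Lean document; each statement's English description precedes it below -/
import Mathlib

section
/- Let F be a finite field of characteristic 2 with |F| = 2^k, and let G = C_3 × D_10 with presentation ⟨x, y, z | x² = y⁵ = z³ = 1, xy = y⁴x, xz = zx, yz = zy⟩. Then the Jacobson radical of the group algebra FG equals the F-span of the three elements (1+x)(1+y+y²+y³+y⁴)zⁱ for i = 0, 1, 2; in particular dim_F J(FG) = 3. -/
namespace Stmt3

abbrev GG := Multiplicative (ZMod 3) × DihedralGroup 5

/-- Action of the dihedral group on five points. -/
def act5 : DihedralGroup 5 → ZMod 5 → ZMod 5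
  | .r i, v => v + i
  | .sr i, v => -(v + i)

/-- Action of the group on fifteen points. -/
def actG (g : GG) (p : Multiplicative (ZMod 3) × ZMod 5) : Multiplicative (ZMod 3) × ZMod 5 :=
  (g.1 * p.1, act5 g.2 p.2)

lemma act5_mul (a b : DihedralGroup 5) (v : ZMod 5) : act5 (a * b) v = act5 a (act5 b v) := by
  rcases a with i | i <;> rcases b with j | j <;>
    simp [act5] <;> ring

lemma actG_mul (a b : GG) (p) : actG (a * b) p = actG a (actG b p) := by
  simp [actG, act5_mul, mul_assoc]

lemma actG_one (p) : actG 1 p = p := by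
  rcases p with ⟨a, b⟩
  have : act5 1 b = b := by
    rw [DihedralGroup.one_def]; simp [act5, -DihedralGroup.r_zero]
  simp [actG, this]

variable (F : Type) [Field F]

/-- The permutation representation by matrices. -/
def rho : GG →* Matrix (Multiplicative (ZMod 3) × ZMod 5) (Multiplicative (ZMod 3) × ZMod 5) F where
  toFun g := Matrix.of fun p q => if p = actG g q then 1 else 0
  map_one' := by
    ext p q
    simp [actG_one, Matrix.one_apply]
  map_mul' a b := by
    ext p q
    simp [Matrix.mul_apply, actG_mul]

lemma fix_count : ∀ g : GG,
    (∑ p : Multiplicative (ZMod 3) × ZMod 5, if p = actG g p then 1 else 0 : ℕ) % 2 =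
    ((if g = 1 then 1 else 0) +
      ∑ i : ZMod 5, if g = (1, DihedralGroup.sr i) then 1 else 0 : ℕ) % 2 := by
  decide +kernel

lemma trace_rho [CharP F 2] (v : MonoidAlgebra F GG) :
    (MonoidAlgebra.lift F _ GG (rho F) v).trace =
      v.coeff 1 + ∑ i : ZMod 5, v.coeff (1, DihedralGroup.sr i) := by
  induction v using MonoidAlgebra.induction_linear with
  | zero => simp
  | add f g hf hg =>
    simp only [map_add, Matrix.trace_add, hf, hg, MonoidAlgebra.coeff_add, Finsupp.add_apply,
      Finset.sum_add_distrib]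
    ring
  | single g c =>
    have h := (CharP.natCast_eq_natCast F 2).2 (fix_count g)
    push_cast at h
    have h2 := congrArg (c * ·) h
    simp only [mul_add, Finset.mul_sum, mul_ite, mul_one, mul_zero] at h2
    simpa [MonoidAlgebra.lift_single, Matrix.trace, rho, Finsupp.single_apply,
      -Finset.sum_boole, -Finset.sum_ite] using h2

lemma jac_eq [Fintype F] [CharP F 2] (w : MonoidAlgebra F GG)
    (hw : w ∈ Ideal.jacobson (⊥ : Ideal (MonoidAlgebra F GG))) (h : GG) :
    w.coeff h = ∑ i : ZMod 5, w.coeff ((1, DihedralGroup.sr i) * h) := by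
  have hfin : IsArtinianRing (MonoidAlgebra F GG) :=
    IsArtinianRing.of_finite F _
  have hnil : IsNilpotent (w * MonoidAlgebra.single h⁻¹ 1) := by
    obtain ⟨n, hn⟩ := IsArtinianRing.isNilpotent_jacobson_bot (R := MonoidAlgebra F GG)
    have hm : w * MonoidAlgebra.single h⁻¹ 1 ∈ Ideal.jacobson (⊥ : Ideal (MonoidAlgebra F GG)) :=
      Ideal.mul_mem_right _ _ hw
    exact ⟨n, by simpa [hn] using Ideal.pow_mem_pow hm n⟩
  have h1 := (Matrix.isNilpotent_trace_of_isNilpotent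
    (hnil.map (MonoidAlgebra.lift F _ GG (rho F)))).eq_zero
  rw [trace_rho] at h1
  simp only [MonoidAlgebra.coeff_mul_single_apply, inv_inv, mul_one, one_mul] at h1
  rw [CharTwo.add_eq_zero] at h1
  exact h1

lemma jac_const [Fintype F] [CharP F 2] (w : MonoidAlgebra F GG)
    (hw : w ∈ Ideal.jacobson (⊥ : Ideal (MonoidAlgebra F GG))) (c : Multiplicative (ZMod 3))
    (d : DihedralGroup 5) :
    w.coeff (c, d) = ∑ i : ZMod 5, w.coeff (c, DihedralGroup.sr i) := by
  have hr : ∀ j, w.coeff (c, DihedralGroup.r j) = ∑ i : ZMod 5, w.coeff (c, DihedralGroup.sr i) := by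
    intro j
    rw [jac_eq F w hw]
    simp only [Prod.mk_mul_mk, one_mul, DihedralGroup.sr_mul_r]
    exact Fintype.sum_equiv (Equiv.addRight j) _ _ (fun _ => rfl)
  rcases d with j | j
  · exact hr j
  · rw [jac_eq F w hw]
    simp only [Prod.mk_mul_mk, one_mul, DihedralGroup.sr_mul_sr, hr]
    have : (5 : F) = 1 := by
      have := (CharP.natCast_eq_natCast F 2 (a := 5) (b := 1)).2 rfl
      simpa using this
    simp [this]

/-- Coset sums. -/
noncomputable def E (c : Multiplicative (ZMod 3)) : MonoidAlgebra F GG :=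
  ∑ d : DihedralGroup 5, MonoidAlgebra.single (c, d) 1

lemma sum_dihedral {M : Type} [AddCommMonoid M] (f : DihedralGroup 5 → M) :
    ∑ d, f d = ∑ i : ZMod 5, f (.r i) + ∑ i : ZMod 5, f (.sr i) := by
  let e : ZMod 5 ⊕ ZMod 5 ≃ DihedralGroup 5 :=
    { toFun := Sum.elim .r .sr
      invFun := fun d => match d with
        | .r i => .inl i
        | .sr i => .inr i
      left_inv := by rintro (i | i) <;> rfl
      right_inv := by rintro (i | i) <;> rfl }
  rw [← e.sum_comp, Fintype.sum_sum_type]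
  rfl

lemma E_apply (c c' : Multiplicative (ZMod 3)) (d) : (E F c).coeff (c', d) = if c = c' then 1 else 0 := by
  classical
  rw [E, MonoidAlgebra.coeff_sum, Finsupp.finsetSum_apply]
  simp only [MonoidAlgebra.coeff_single, Finsupp.single_apply, Prod.mk.injEq]
  by_cases h : c = c' <;> simp [h]

lemma E_mul_single (c c' : Multiplicative (ZMod 3)) (d) (t : F) :
    E F c * MonoidAlgebra.single (c', d) t = t • E F (c * c') := by
  rw [E, E, Finset.sum_mul, Finset.smul_sum]
  exact Fintype.sum_equiv (Equiv.mulRight d) _ _ (fun _ => by simp)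

lemma E_mul_E [CharP F 2] (c c') : E F c * E F c' = 0 := by
  conv_lhs => rw [E.eq_1 F c', Finset.mul_sum]
  simp only [E_mul_single, one_smul, Finset.sum_const]
  have : (10 : F) = 0 := by
    have := (CharP.cast_eq_zero_iff F 2 10).2 (by norm_num)
    simpa using this
  have hc : (Finset.univ : Finset (DihedralGroup 5)).card = 10 := by
    simp [DihedralGroup.card]
  rw [hc, ← Nat.cast_smul_eq_nsmul F]
  simp [this]

lemma E_mul_mul_E [CharP F 2] (c c') (y : MonoidAlgebra F GG) : E F c * y * E F c' = 0 := by
  induction y using MonoidAlgebra.induction_linear with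
  | zero => simp
  | add f g hf hg => rw [mul_add, add_mul, hf, hg, add_zero]
  | single g t =>
    rcases g with ⟨a, b⟩
    rw [E_mul_single, smul_mul_assoc, E_mul_E, smul_zero]

lemma E_mem [CharP F 2] (c) : E F c ∈ Ideal.jacobson (⊥ : Ideal (MonoidAlgebra F GG)) := by
  rw [Ideal.mem_jacobson_iff]
  intro y
  refine ⟨1 - y * E F c, ?_⟩
  have h := E_mul_mul_E F c c y
  have : (1 - y * E F c) * y * E F c + (1 - y * E F c) - 1 = - (y * (E F c * y * E F c)) := by
    noncomm_ring
  rw [this, h]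
  simp

/-- The elements of the cyclic group of order three. -/
def zc (i : Fin 3) : Multiplicative (ZMod 3) := Multiplicative.ofAdd ((i : ℕ) : ZMod 3)

lemma zc_inj : ∀ i j : Fin 3, zc i = zc j ↔ i = j := by decide

lemma zc_surj : ∀ c, ∃ i : Fin 3, zc i = c := by decide

lemma a_eq (i : Fin 3) :
    (1 + MonoidAlgebra.of F GG (1, DihedralGroup.sr 0)) *
      (∑ j : Fin 5, MonoidAlgebra.of F GG ((1, DihedralGroup.r 1) ^ (j : ℕ))) *
      MonoidAlgebra.of F GG ((Multiplicative.ofAdd 1, 1) ^ (i : ℕ)) =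
    E F (zc i) := by
  have hE : (∑ j : Fin 5, MonoidAlgebra.of F GG ((1, DihedralGroup.r 1) ^ (j : ℕ))) +
      (∑ j : Fin 5, MonoidAlgebra.of F GG ((1, DihedralGroup.sr 0)) *
        MonoidAlgebra.of F GG ((1, DihedralGroup.r 1) ^ (j : ℕ))) = E F 1 := by
    rw [E, sum_dihedral]
    refine congrArg₂ (· + ·) ?_ ?_
    · refine Finset.sum_congr rfl fun j _ => ?_
      fin_cases j <;> rfl
    · refine Finset.sum_congr rfl fun j _ => ?_
      rw [← map_mul]
      fin_cases j <;> rfl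
  rw [add_mul, one_mul, Finset.mul_sum, hE]
  have : ((Multiplicative.ofAdd 1, 1) ^ (i : ℕ) : GG) = (zc i, 1) := by
    revert i; decide
  rw [this, MonoidAlgebra.of_apply, E_mul_single, one_smul, one_mul]

end Stmt3

open Stmt3 in
/-- For `F` a finite field of characteristic 2 and `G = C₃ × D₁₀`, the Jacobson radical of
`FG` equals the `F`-span of the three elements `(1+x)(1+y+y²+y³+y⁴)zⁱ`, `i = 0, 1, 2`,
and has `F`-dimension 3. -/
theorem stmt_3 (F : Type) [Field F] [Fintype F] (k : ℕ) (hk : 0 < k)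
    (hchar : CharP F 2) (hcard : Fintype.card F = 2 ^ k) :
    let G := Multiplicative (ZMod 3) × DihedralGroup 5
    let x : G := (1, DihedralGroup.sr 0)
    let y : G := (1, DihedralGroup.r 1)
    let z : G := (Multiplicative.ofAdd 1, 1)
    let X : G → MonoidAlgebra F G := MonoidAlgebra.of F G
    let a : Fin 3 → MonoidAlgebra F G := fun i =>
      (1 + X x) * (∑ j : Fin 5, X (y ^ (j : ℕ))) * X (z ^ (i : ℕ))
    ((Ideal.jacobson (⊥ : Ideal (MonoidAlgebra F G)) : Set (MonoidAlgebra F G))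
        = (Submodule.span F {a 0, a 1, a 2} : Submodule F (MonoidAlgebra F G))) ∧
    Module.finrank F (Submodule.span F {a 0, a 1, a 2} : Submodule F (MonoidAlgebra F G)) = 3 := by
  intro G x y z X a
  have ha : ∀ i : Fin 3, a i = E F (zc i) := fun i => a_eq F i
  have hset : ({a 0, a 1, a 2} : Set (MonoidAlgebra F G)) = Set.range a := by
    ext w
    simp [Fin.exists_fin_succ, eq_comm]
  have hval : ∀ (i j : Fin 3) (d : DihedralGroup 5),
      (a i).coeff (zc j, d) = if i = j then 1 else 0 := by
    intro i j d
    rw [ha, E_apply]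
    simp only [zc_inj]
  have hcomb : ∀ (g : Fin 3 → F) (j : Fin 3) (d : DihedralGroup 5),
      (∑ i, g i • a i).coeff (zc j, d) = g j := by
    intro g j d
    rw [MonoidAlgebra.coeff_sum, Finsupp.finsetSum_apply]
    simp [hval]
  rw [hset]
  constructor
  · apply Set.Subset.antisymm
    · intro w hw
      have : w = ∑ i : Fin 3, (w.coeff (zc i, 1)) • a i := by
        apply MonoidAlgebra.ext
        apply Finsupp.ext
        rintro ⟨c, d⟩
        obtain ⟨j, rfl⟩ := zc_surj c
        refine Eq.trans ?_ (hcomb _ j d).symm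
        exact (jac_const F w hw _ d).trans (jac_const F w hw _ 1).symm
      rw [this]
      exact Submodule.sum_mem _ fun i _ =>
        Submodule.smul_mem _ _ (Submodule.subset_span ⟨i, rfl⟩)
    · intro w hw
      induction hw using Submodule.span_induction with
      | mem v hv =>
        obtain ⟨i, rfl⟩ := hv
        rw [ha]
        exact E_mem F _
      | zero => exact Ideal.zero_mem _
      | add u v _ _ hu hv => exact Ideal.add_mem _ hu hv
      | smul t v _ hv =>
        rw [Algebra.smul_def]
        exact Ideal.mul_mem_left _ _ hv
  · have hli : LinearIndependent F a := by
      rw [Fintype.linearIndependent_iff]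
      intro g hg j
      rw [← hcomb g j 1, hg]
      rfl
    simpa using finrank_span_eq_card hli
end

section
/- Let F be a finite field of characteristic 2 and G = C_3 × D_10. Then J(FG)² = 0, i.e., the Jacobson radical of FG squares to zero. -/
/-- The part `y` of an element of `J` kills all `σ n - n` and is fixed by `σ`. -/
theorem aux_part {A R : Type*} [CommRing A] [IsReduced A] [Ring R] (ι : A →+* R) (σ : A →+* A)
    (s : R) (hss : s * s = 1) (hs : ∀ n, s * ι n = ι (σ n) * s) (hσ : ∀ n, σ (σ n) = n)
    (J : Ideal R) [J.IsTwoSided] (hJ : ∀ z, ι z ∈ J → z = 0)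
    (x y : A) (h : ι x + ι y * s ∈ J) : σ y = y := by
  have h1 : ∀ n, y * (σ n - n) = 0 := by
    intro n
    apply hJ
    have e : ι (y * (σ n - n)) = ((ι x + ι y * s) * ι n - ι n * (ι x + ι y * s)) * s := by
      have e1 : ι y * s * ι n = ι (y * σ n) * s := by rw [mul_assoc, hs, ← mul_assoc, map_mul]
      have e2 : (ι x + ι y * s) * ι n - ι n * (ι x + ι y * s) = ι (y * (σ n - n)) * s := by
        rw [add_mul, e1, mul_add, ← mul_assoc, ← map_mul, ← map_mul, ← map_mul, mul_comm n x,
          mul_comm n y, mul_sub, map_sub, sub_mul]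
        abel
      rw [e2, mul_assoc, hss, mul_one]
    rw [e]
    exact J.mul_mem_right _ (J.sub_mem (J.mul_mem_right _ h) (J.mul_mem_left _ h))
  have h2 := h1 y
  have h3 : σ y * (y - σ y) = 0 := by
    have := congrArg σ h2
    simpa [hσ] using this
  have h4 : (σ y - y) ^ 2 = 0 := by linear_combination -h3 - h2
  exact sub_eq_zero.mp (eq_zero_of_pow_eq_zero h4)

/-- Elements of `J` have the form `x (1 + s)` with `x` fixed by `σ`. -/
theorem aux_form {A R : Type*} [CommRing A] [IsReduced A] [Ring R] (h2 : (2 : A) = 0)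
    (ι : A →+* R) (σ : A →+* A)
    (s : R) (hss : s * s = 1) (hs : ∀ n, s * ι n = ι (σ n) * s) (hσ : ∀ n, σ (σ n) = n)
    (J : Ideal R) [J.IsTwoSided] (hJ : ∀ z, ι z ∈ J → z = 0)
    (hdec : ∀ a : R, ∃ x y, a = ι x + ι y * s) (a : R) (ha : a ∈ J) :
    ∃ x, σ x = x ∧ a = ι x * (1 + s) := by
  obtain ⟨x, y, rfl⟩ := hdec a
  have hy := aux_part ι σ s hss hs hσ J hJ x y ha
  have hx : σ x = x := by
    apply aux_part ι σ s hss hs hσ J hJ y x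
    have := J.mul_mem_right s ha
    rwa [add_mul, mul_assoc, hss, mul_one, add_comm] at this
  have sx : s * ι x = ι x * s := by rw [hs, hx]
  have sy : s * ι y = ι y * s := by rw [hs, hy]
  have e : (ι x + ι y * s) * (ι x + ι y * s) = ι ((x + y) ^ 2) := by
    have e1 : (ι x + ι y * s) * (ι x + ι y * s)
        = ι x * ι x + ι x * ι y * s + ι y * (s * ι x) + ι y * (s * ι y) * s := by noncomm_ring
    have e2 : ι y * (ι y * s) * s = ι y * ι y := by
      rw [mul_assoc, mul_assoc (ι y), hss, mul_one]
    rw [e1, sx, sy, e2, ← mul_assoc, ← map_mul, ← map_mul, ← map_mul, ← map_mul, mul_comm y x,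
      add_assoc (ι (x * x)), ← add_mul, ← map_add]
    have e3 : x * y + x * y = 0 := by linear_combination (x * y) * h2
    rw [e3, map_zero, zero_mul, add_zero, ← map_add]
    congr 1
    linear_combination -(x * y) * h2
  have h5 : (x + y) ^ 2 = 0 := hJ _ (e ▸ J.mul_mem_left _ ha)
  have h6 : x + y = 0 := eq_zero_of_pow_eq_zero h5
  have h7 : y = x := by linear_combination h6 - x * h2
  subst h7
  exact ⟨y, hx, by rw [mul_add, mul_one]⟩

/-- The abstract argument. -/
theorem aux_main {A R : Type*} [CommRing A] [IsReduced A] [Ring R] (h2 : (2 : A) = 0)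
    (ι : A →+* R) (σ : A →+* A)
    (s : R) (hss : s * s = 1) (hs : ∀ n, s * ι n = ι (σ n) * s) (hσ : ∀ n, σ (σ n) = n)
    (J : Ideal R) [J.IsTwoSided] (hJ : ∀ z, ι z ∈ J → z = 0)
    (hdec : ∀ a : R, ∃ x y, a = ι x + ι y * s) (a b : R) (ha : a ∈ J) (hb : b ∈ J) :
    a * b = 0 := by
  obtain ⟨x, hx, rfl⟩ := aux_form h2 ι σ s hss hs hσ J hJ hdec a ha
  obtain ⟨z, hz, rfl⟩ := aux_form h2 ι σ s hss hs hσ J hJ hdec b hb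
  have sz : (1 + s) * ι z = ι z * (1 + s) := by rw [add_mul, hs, hz, mul_add, one_mul, mul_one]
  have hR : (2 : R) = 0 := by rw [← map_ofNat ι 2, h2, map_zero]
  have hq : (1 + s) * (1 + s) = 0 := by
    have : (1 + s) * (1 + s) = 1 + s + s + s * s := by noncomm_ring
    rw [this, hss]
    have : 1 + s + s + 1 = 2 * (1 + s) := by noncomm_ring
    rw [this, hR, zero_mul]
  rw [mul_assoc, ← mul_assoc (1 + s), sz, mul_assoc, hq, mul_zero, mul_zero]

/-- The group algebra of a commutative group of exponent dividing 15 over a field of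
characteristic 2 is reduced. -/
theorem aux_reduced (F N : Type*) [Field F] [CharP F 2] [CommGroup N] (hN : ∀ g : N, g ^ 16 = g) :
    IsReduced (MonoidAlgebra F N) := by
  have : Fact (Nat.Prime 2) := ⟨Nat.prime_two⟩
  have : CharP (MonoidAlgebra F N) 2 := charP_of_injective_algebraMap' F 2
  have key : ∀ x : MonoidAlgebra F N,
      x ^ 16 = MonoidAlgebra.mapRingHom N (iterateFrobenius F 2 4) x := by
    have : iterateFrobenius (MonoidAlgebra F N) 2 4
        = MonoidAlgebra.mapRingHom N (iterateFrobenius F 2 4) := by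
      apply MonoidAlgebra.ringHom_ext
      · intro r
        simp [iterateFrobenius_def, MonoidAlgebra.single_pow]
      · intro g
        simp [iterateFrobenius_def, MonoidAlgebra.single_pow, hN]
    intro x
    rw [← this, iterateFrobenius_def]
    norm_num
  rw [isReduced_iff_pow_one_lt 16 (by norm_num)]
  intro x hx
  rw [key, MonoidAlgebra.coe_mapRingHom] at hx
  refine MonoidAlgebra.map_injective (iterateFrobenius F 2 4 : F →+ F)
    (iterateFrobenius F 2 4).injective ?_
  rw [MonoidAlgebra.map_zero]
  exact hx

/-- The embedding of the normal subgroup of order 15. -/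
def auxI : Multiplicative (ZMod 3) × Multiplicative (ZMod 5) →*
    Multiplicative (ZMod 3) × DihedralGroup 5 where
  toFun p := (p.1, DihedralGroup.r p.2.toAdd)
  map_one' := rfl
  map_mul' p q := by simp [DihedralGroup.r_mul_r]

theorem auxI_apply (p : Multiplicative (ZMod 3)) (q : Multiplicative (ZMod 5)) :
    auxI (p, q) = (p, DihedralGroup.r q.toAdd) := rfl

theorem auxI_injective : Function.Injective auxI := by
  rintro ⟨p, q⟩ ⟨p2, q2⟩ h
  have heq : (p, DihedralGroup.r q.toAdd) = (p2, DihedralGroup.r q2.toAdd) := h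
  simpa using heq

/-- Inversion on the factor of order 5. -/
def auxT : Multiplicative (ZMod 3) × Multiplicative (ZMod 5) →*
    Multiplicative (ZMod 3) × Multiplicative (ZMod 5) where
  toFun p := (p.1, p.2⁻¹)
  map_one' := by simp
  map_mul' p q := by simp [mul_comm]

theorem auxI_T (g : Multiplicative (ZMod 3) × Multiplicative (ZMod 5)) :
    (1, DihedralGroup.sr 0) * auxI g = auxI (auxT g) * (1, DihedralGroup.sr 0) := by
  obtain ⟨p, q⟩ := g
  have h : auxT (p, q) = (p, q⁻¹) := rfl
  rw [h, auxI_apply, auxI_apply]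
  simp

theorem auxI_sr (p : Multiplicative (ZMod 3)) (k : ZMod 5) :
    (p, DihedralGroup.sr k) =
      auxI (p, Multiplicative.ofAdd (-k)) * (1, DihedralGroup.sr 0) := by
  rw [auxI_apply]
  simp

theorem auxT_T (g : Multiplicative (ZMod 3) × Multiplicative (ZMod 5)) : auxT (auxT g) = g := by
  simp [auxT]

/-- For `F` a finite field of characteristic 2 and `G = C₃ × D₁₀`, the Jacobson radical of
`FG` squares to zero. -/
theorem stmt_4 (F : Type) [Field F] [Fintype F] (hchar : CharP F 2) :
    let G := Multiplicative (ZMod 3) × DihedralGroup 5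
    ∀ a b : MonoidAlgebra F G,
      a ∈ Ideal.jacobson (⊥ : Ideal (MonoidAlgebra F G)) →
      b ∈ Ideal.jacobson (⊥ : Ideal (MonoidAlgebra F G)) →
      a * b = 0 := by
  intro G a b ha hb
  let N := Multiplicative (ZMod 3) × Multiplicative (ZMod 5)
  let i : N →* G := auxI
  let t : N →* N := auxT
  have hi : Function.Injective i := auxI_injective
  let ι := MonoidAlgebra.mapDomainRingHom F i
  let σ := MonoidAlgebra.mapDomainRingHom F t
  have ιs : ∀ g r, ι (MonoidAlgebra.single g r) = MonoidAlgebra.single (i g) r :=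
    fun g r => MonoidAlgebra.mapDomain_single
  have σs : ∀ g r, σ (MonoidAlgebra.single g r) = MonoidAlgebra.single (t g) r :=
    fun g r => MonoidAlgebra.mapDomain_single
  have hι : Function.Injective ι := MonoidAlgebra.mapDomain_injective hi
  have : IsReduced (MonoidAlgebra F N) := aux_reduced F N (by
    rintro ⟨p, q⟩
    revert p q
    decide)
  have h2 : (2 : MonoidAlgebra F N) = 0 := by
    have : CharP (MonoidAlgebra F N) 2 := charP_of_injective_algebraMap' F 2
    exact CharTwo.two_eq_zero
  have : IsArtinianRing (MonoidAlgebra F G) := IsArtinianRing.of_finite F _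
  refine aux_main h2 ι σ (MonoidAlgebra.single ((1, DihedralGroup.sr 0) : G) 1) ?_ ?_ ?_
    (Ideal.jacobson (⊥ : Ideal (MonoidAlgebra F G))) ?_ ?_ a b ha hb
  · rw [MonoidAlgebra.single_mul_single, MonoidAlgebra.one_def]
    simp
    rfl
  · intro n
    induction n using MonoidAlgebra.induction_linear with
    | zero => simp
    | add x y hx hy => rw [map_add, mul_add, hx, hy, map_add, map_add, add_mul]
    | single g r =>
      rw [ιs, σs, ιs, MonoidAlgebra.single_mul_single, MonoidAlgebra.single_mul_single, one_mul,
        mul_one]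
      congr 1
      exact auxI_T g
  · intro n
    induction n using MonoidAlgebra.induction_linear with
    | zero => simp
    | add x y hx hy => rw [map_add, map_add, hx, hy]
    | single g r =>
      rw [σs, σs]
      exact congrArg (fun g => MonoidAlgebra.single g r) (auxT_T g)
  · intro z hz
    obtain ⟨n, hn⟩ := IsArtinianRing.isNilpotent_jacobson_bot (R := MonoidAlgebra F G)
    have h1 := Ideal.pow_mem_pow hz n
    rw [hn] at h1
    have h3 : ι z ^ n = 0 := h1
    rw [← map_pow] at h3
    have h4 : z ^ n = 0 := hι (by rw [h3, map_zero])
    exact eq_zero_of_pow_eq_zero h4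
  · intro c
    induction c using MonoidAlgebra.induction_linear with
    | zero => exact ⟨0, 0, by simp⟩
    | add x y hx hy =>
      obtain ⟨x1, y1, rfl⟩ := hx
      obtain ⟨x2, y2, rfl⟩ := hy
      exact ⟨x1 + x2, y1 + y2, by rw [map_add, map_add, add_mul]; abel⟩
    | single g r =>
      obtain ⟨p, q⟩ := g
      cases q with
      | r k =>
        refine ⟨MonoidAlgebra.single (p, Multiplicative.ofAdd k) r, 0, ?_⟩
        rw [ιs, map_zero, zero_mul, add_zero]
        rfl
      | sr k =>
        refine ⟨0, MonoidAlgebra.single (p, Multiplicative.ofAdd (-k)) r, ?_⟩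
        rw [ιs, map_zero, zero_add, MonoidAlgebra.single_mul_single, mul_one]
        congr 1
        exact auxI_sr p k
end

section
/- Let F be a finite field with q elements, q ≡ 1 or 4 (mod 15), of characteristic 2. Then FG/J(FG) ≅ F³ ⊕ M₂(F)⁶ as F-algebras, where G = C_3 × D_10. -/
namespace S5

variable {F : Type} [Field F]

lemma exists_omega [Fintype F] [CharP F 2]
    (hq : Fintype.card F % 15 = 1 ∨ Fintype.card F % 15 = 4) : ∃ w : F, w ^ 2 + w + 1 = 0 := by
  classical
  have h3 : 3 ∣ Fintype.card Fˣ := by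
    rw [Fintype.card_units]; omega
  have : Fact (Nat.Prime 3) := ⟨Nat.prime_three⟩
  obtain ⟨u, hu⟩ := exists_prime_orderOf_dvd_card 3 h3
  have h1 : (u : F) ^ 3 = 1 := by
    have := pow_orderOf_eq_one u
    rw [hu] at this
    simpa using congrArg Units.val this
  have h2 : (u : F) ≠ 1 := by
    intro h
    have : u = 1 := Units.ext h
    simp [this] at hu
  refine ⟨u, ?_⟩
  have : ((u : F) - 1) * ((u : F) ^ 2 + u + 1) = 0 := by linear_combination h1
  rcases mul_eq_zero.1 this with h | h
  · exact absurd (sub_eq_zero.1 h) h2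
  · exact h

/-- The image of the rotation. -/
def R (a : F) : Matrix (Fin 2) (Fin 2) F := !![0, 1; 1, a]
/-- The image of the reflection. -/
def S : Matrix (Fin 2) (Fin 2) F := !![0, 1; 1, 0]

lemma SS : (S : Matrix (Fin 2) (Fin 2) F) * S = 1 := by
  simp [S, Matrix.one_fin_two]

lemma R4 [CharP F 2] {a : F} (ha : a ^ 2 + a + 1 = 0) : R a ^ 4 = !![a, 1; 1, 0] := by
  have h2 : (2 : F) = 0 := CharTwo.two_eq_zero
  have : R a ^ 4 = (R a * R a) * (R a * R a) := by noncomm_ring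
  rw [this]
  ext i j
  fin_cases i <;> fin_cases j <;> simp [R] <;> grind

lemma R5 [CharP F 2] {a : F} (ha : a ^ 2 + a + 1 = 0) : R a ^ 5 = 1 := by
  have h2 : (2 : F) = 0 := CharTwo.two_eq_zero
  rw [pow_succ, R4 ha]
  ext i j
  fin_cases i <;> fin_cases j <;> simp [R] <;> grind

lemma Rsum [CharP F 2] {a : F} (ha : a ^ 2 + a + 1 = 0) :
    1 + R a + R a ^ 2 + R a ^ 3 + R a ^ 4 = 0 := by
  have h2 : (2 : F) = 0 := CharTwo.two_eq_zero
  rw [R4 ha, pow_succ _ 2, pow_two]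
  ext i j
  fin_cases i <;> fin_cases j <;> simp [R] <;> grind

lemma RS [CharP F 2] {a : F} (ha : a ^ 2 + a + 1 = 0) : R a * S = S * R a ^ 4 := by
  rw [R4 ha]
  ext i j
  fin_cases i <;> fin_cases j <;> simp [R, S]

lemma pow_val_add {M : Type*} [Monoid M] {n : ℕ} [NeZero n] {x : M} (h : x ^ n = 1) (i j : ZMod n) :
    x ^ (i + j).val = x ^ i.val * x ^ j.val := by
  rw [ZMod.val_add, ← pow_add, ← pow_eq_pow_mod _ h]


lemma pow_val_neg {M : Type*} [Monoid M] {x y : M} (h : x ^ 5 = 1) (hxy : x * y = y * x ^ 4)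
    (i : ZMod 5) : x ^ i.val * y = y * x ^ (-i).val := by
  have h1 : SemiconjBy y (x ^ 4) x := hxy.symm
  have h2 := (h1.pow_right i.val).eq
  rw [← h2, ← pow_mul, pow_eq_pow_mod (4 * i.val) h]
  congr 2
  clear h2
  revert i; decide

/-- The dihedral group representation. -/
def rhoFun (a : F) : DihedralGroup 5 → Matrix (Fin 2) (Fin 2) F
  | .r i => R a ^ i.val
  | .sr i => S * R a ^ i.val

/-- The dihedral group representation as a homomorphism. -/
def rho [CharP F 2] (a : F) (ha : a ^ 2 + a + 1 = 0) :
    DihedralGroup 5 →* Matrix (Fin 2) (Fin 2) F where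
  toFun := rhoFun a
  map_one' := by
    rw [DihedralGroup.one_def]
    simp [rhoFun]
  map_mul' x y := by
    have h5 := R5 ha
    have hn := pow_val_neg h5 (RS ha)
    rcases x with i | i <;> rcases y with j | j
    · simp [rhoFun, pow_val_add h5]
    · simp only [rhoFun, DihedralGroup.r_mul_sr]
      rw [← mul_assoc, hn, mul_assoc, ← pow_val_add h5]
      congr 3; ring
    · simp only [rhoFun, DihedralGroup.sr_mul_r]
      rw [mul_assoc, ← pow_val_add h5]
    · simp only [rhoFun, DihedralGroup.sr_mul_sr]
      rw [mul_assoc, ← mul_assoc _ S, hn, mul_assoc, ← mul_assoc S, SS, one_mul,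
        ← pow_val_add h5]
      congr 2; ring

/-- Characters of the cyclic group. -/
def chi (w : F) (hw : w ^ 3 = 1) : Multiplicative (ZMod 3) →* F where
  toFun c := w ^ (Multiplicative.toAdd c).val
  map_one' := by simp
  map_mul' x y := by
    rw [toAdd_mul, pow_val_add hw]

abbrev G := Multiplicative (ZMod 3) × DihedralGroup 5
abbrev B (F : Type) := (Fin 3 → F) × (Fin 6 → Matrix (Fin 2) (Fin 2) F)

/-- two-dimensional irreducible representations of `G`. -/
def tens [CharP F 2] (w : F) (hw : w ^ 3 = 1) (a : F) (ha : a ^ 2 + a + 1 = 0) :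
    G →* Matrix (Fin 2) (Fin 2) F where
  toFun g := chi w hw g.1 • rho a ha g.2
  map_one' := by simp
  map_mul' x y := by
    simp [smul_smul, mul_comm]

def w3 (w : F) : Fin 3 → F := ![1, w, w ^ 2]
def w6 (w : F) : Fin 6 → F := ![1, 1, w, w, w ^ 2, w ^ 2]
def a6 (w : F) : Fin 6 → F := ![w, w ^ 2, w, w ^ 2, w, w ^ 2]

lemma w3_pow [CharP F 2] {w : F} (hw : w ^ 2 + w + 1 = 0) (i) : w3 w i ^ 3 = 1 := by
  fin_cases i <;> simp [w3] <;> grind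
lemma w6_pow [CharP F 2] {w : F} (hw : w ^ 2 + w + 1 = 0) (i) : w6 w i ^ 3 = 1 := by
  fin_cases i <;> simp [w6] <;> grind
lemma a6_eq [CharP F 2] {w : F} (hw : w ^ 2 + w + 1 = 0) (i) : a6 w i ^ 2 + a6 w i + 1 = 0 := by
  fin_cases i <;> simp [a6] <;> grind

/-- The group homomorphism. -/
def psi [CharP F 2] (w : F) (hw : w ^ 2 + w + 1 = 0) : G →* B F :=
  MonoidHom.prod
    (MonoidHom.pi fun i => (chi (w3 w i) (w3_pow hw i)).comp (MonoidHom.fst _ _))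
    (MonoidHom.pi fun k => tens (w6 w k) (w6_pow hw k) (a6 w k) (a6_eq hw k))

/-- The algebra homomorphism. -/
noncomputable def phi [CharP F 2] (w : F) (hw : w ^ 2 + w + 1 = 0) :
    MonoidAlgebra F G →ₐ[F] B F := MonoidAlgebra.lift F (B F) G (psi w hw)

section
variable [CharP F 2] {w : F} (hw : w ^ 2 + w + 1 = 0)

lemma psi_mem (g : G) : psi w hw g ∈ (phi w hw).range :=
  ⟨MonoidAlgebra.of F G g, by simp [phi]⟩

lemma psi_apply (g : G) : psi w hw g = (fun i => w3 w i ^ (Multiplicative.toAdd g.1).val,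
    fun k => w6 w k ^ (Multiplicative.toAdd g.1).val • rhoFun (a6 w k) g.2) := rfl

lemma c_mem : ((w3 w, fun k => w6 w k • 1) : B F) ∈ (phi w hw).range := by
  have h := psi_mem hw (.ofAdd 1, .r 0)
  convert h using 1
  rw [psi_apply]
  have e : (Multiplicative.toAdd (Multiplicative.ofAdd (1 : ZMod 3))).val = 1 := rfl
  refine Prod.ext (funext fun i => ?_) (funext fun k => ?_)
  · simp only [e, pow_one]
  · simp only [e, pow_one, rhoFun, ZMod.val_zero, pow_zero]

lemma r_mem : ((1, fun k => R (a6 w k)) : B F) ∈ (phi w hw).range := by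
  have h := psi_mem hw (1, .r 1)
  convert h using 1
  rw [psi_apply]
  have e : (1 : ZMod 5).val = 1 := rfl
  refine Prod.ext (funext fun i => ?_) (funext fun k => ?_)
  · simp
  · simp [e, rhoFun]

lemma s_mem : ((1, fun _ => S) : B F) ∈ (phi w hw).range := by
  have h := psi_mem hw (1, .sr 0)
  convert h using 1
  rw [psi_apply]
  refine Prod.ext (funext fun i => ?_) (funext fun k => ?_)
  · simp
  · simp [rhoFun]

lemma t_mem : ((0, fun k => a6 w k • 1) : B F) ∈ (phi w hw).range := by
  have h := add_mem (r_mem hw) (pow_mem (r_mem hw) 4)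
  convert h using 1
  have h2 : (2 : F) = 0 := CharTwo.two_eq_zero
  refine Prod.ext (funext fun i => ?_) (funext fun k => ?_)
  · simp; grind
  · simp only [Prod.mk_add_mk, Pi.add_apply, Prod.pow_mk, Pi.pow_apply, R4 (a6_eq hw k)]
    clear h
    simp only [R]
    ext i j
    fin_cases i <;> fin_cases j <;> simp <;> grind

/-- Scalar elements. -/
def sc (x : Fin 3 → F) (y : Fin 6 → F) : B F := (x, fun k => y k • 1)

lemma sc_add (x x' : Fin 3 → F) (y y') : sc x y + sc x' y' = sc (x + x') (y + y') := by
  simp only [sc, Prod.mk_add_mk, Prod.mk.injEq, true_and]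
  ext1 k; simp [add_smul]

lemma sc_mul (x x' : Fin 3 → F) (y y') : sc x y * sc x' y' = sc (x * x') (y * y') := by
  simp only [sc, Prod.mk_mul_mk, Prod.mk.injEq, true_and]
  ext1 k; simp [smul_smul]; try rw [mul_comm]

lemma sc_smul (a : F) (x : Fin 3 → F) (y) : a • sc x y = sc (a • x) (a • y) := by
  simp only [sc, Prod.smul_mk, Prod.mk.injEq, true_and]
  ext1 k; simp [smul_smul]

lemma sc_one : (1 : B F) = sc 1 1 := by
  simp only [sc, Prod.one_eq_mk, Prod.mk.injEq, true_and]
  ext1 k; simp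

lemma sc_c_mem : sc (w3 w) (w6 w) ∈ (phi w hw).range := c_mem hw
lemma sc_t_mem : sc 0 (a6 w) ∈ (phi w hw).range := t_mem hw

lemma Q_mem (i : Fin 3) : sc (Pi.single i 1) 0 ∈ (phi w hw).range := by
  have hc := sc_c_mem hw
  have ht := sc_t_mem hw
  have h1 : (1 : B F) ∈ (phi w hw).range := one_mem _
  have h := mul_mem (add_mem h1 (add_mem (Subalgebra.smul_mem _ hc (w3 w i ^ 2))
    (Subalgebra.smul_mem _ (mul_mem hc hc) (w3 w i))))
    (add_mem h1 (mul_mem ht (mul_mem ht ht)))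
  simp only [sc_one, sc_mul, sc_smul, sc_add] at h
  convert h using 2
  · have h2 : (2 : F) = 0 := CharTwo.two_eq_zero
    clear h h1 hc ht
    ext j
    simp only [Pi.mul_apply, Pi.add_apply, Pi.smul_apply, smul_eq_mul, Pi.one_apply, Pi.zero_apply,
      Pi.single_apply]
    fin_cases i <;> fin_cases j <;> simp [w3] <;> grind
  · have h2 : (2 : F) = 0 := CharTwo.two_eq_zero
    ext k
    have := a6_eq hw k
    have h0 : 1 + a6 w k * (a6 w k * a6 w k) = 0 := by grind
    simp [h0]

lemma P_mem (k : Fin 6) : sc 0 (Pi.single k 1) ∈ (phi w hw).range := by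
  have hc := sc_c_mem hw
  have ht := sc_t_mem hw
  have h1 : (1 : B F) ∈ (phi w hw).range := one_mem _
  have h := mul_mem (add_mem h1 (add_mem (Subalgebra.smul_mem _ hc (w6 w k ^ 2))
    (Subalgebra.smul_mem _ (mul_mem hc hc) (w6 w k))))
    (Subalgebra.smul_mem _
      (mul_mem ht (add_mem ht (Subalgebra.smul_mem _ h1 (a6 w k ^ 2)))) (a6 w k ^ 2))
  simp only [sc_one, sc_mul, sc_smul, sc_add] at h
  convert h using 2
  · simp
  · have h2 : (2 : F) = 0 := CharTwo.two_eq_zero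
    clear h h1 hc ht
    ext j
    simp only [Pi.mul_apply, Pi.add_apply, Pi.smul_apply, smul_eq_mul, Pi.one_apply,
      Pi.single_apply]
    have h3 : w ^ 3 = 1 := by grind
    fin_cases k <;> fin_cases j <;> simp [w6, a6] <;> grind

lemma M_mem (k : Fin 6) (i j : Fin 2) :
    ((0, Pi.single k (Matrix.single i j 1)) : B F) ∈ (phi w hw).range := by
  have hR := r_mem hw
  have hS := s_mem hw
  have h1 : (1 : B F) ∈ (phi w hw).range := one_mem _
  have hP := P_mem hw k
  have h2 : (2 : F) = 0 := CharTwo.two_eq_zero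
  have ha := a6_eq hw k
  have key : ∀ X : B F, X ∈ (phi w hw).range → X.2 k = Matrix.single i j 1 →
      ((0, Pi.single k (Matrix.single i j 1)) : B F) ∈ (phi w hw).range := by
    intro X hX hk
    convert mul_mem hP hX using 1
    refine Prod.ext (funext fun i => ?_) (funext fun l => ?_)
    · simp [sc]
    · by_cases hl : l = k
      · subst hl; simp [sc, hk]
      · simp [sc, hl]
  have hRS := add_mem hR hS
  fin_cases i <;> fin_cases j
  · refine key _ (add_mem h1 (Subalgebra.smul_mem _ (add_mem hR hS) (a6 w k ^ 2))) ?_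
    ext i j; fin_cases i <;> fin_cases j <;> simp [R, S, Matrix.single] <;> grind
  · refine key _ (Subalgebra.smul_mem _ (add_mem (mul_mem hS hR) h1) (a6 w k ^ 2)) ?_
    ext i j; fin_cases i <;> fin_cases j <;> simp [R, S, Matrix.single] <;> grind
  · refine key _ (Subalgebra.smul_mem _ (add_mem (mul_mem hR hS) h1) (a6 w k ^ 2)) ?_
    ext i j; fin_cases i <;> fin_cases j <;> simp [R, S, Matrix.single] <;> grind
  · refine key _ (Subalgebra.smul_mem _ (add_mem hR hS) (a6 w k ^ 2)) ?_
    ext i j; fin_cases i <;> fin_cases j <;> simp [R, S, Matrix.single] <;> grind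

lemma phi_surj : Function.Surjective (phi w hw) := by
  intro y
  have h : (∑ i, y.1 i • sc (Pi.single i 1) 0 + ∑ k, ∑ i, ∑ j, y.2 k i j •
      ((0, Pi.single k (Matrix.single i j 1)) : B F)) ∈ (phi w hw).range :=
    add_mem (sum_mem fun i _ => Subalgebra.smul_mem _ (Q_mem hw i) _)
      (sum_mem fun k _ => sum_mem fun i _ => sum_mem fun j _ =>
        Subalgebra.smul_mem _ (M_mem hw k i j) _)
  obtain ⟨x, hx⟩ := h
  refine ⟨x, Eq.trans hx ?_⟩
  refine Prod.ext (funext fun i => ?_) (funext fun l => ?_)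
  · simp [sc, Prod.fst_sum, Finset.sum_apply, Pi.single_apply]
  · ext i j
    simp only [sc, Prod.snd_add, Prod.snd_sum, Prod.smul_snd, Pi.add_apply, Finset.sum_apply,
      Pi.smul_apply, Pi.zero_apply, zero_smul, smul_zero, Finset.sum_const_zero, zero_add]
    rw [Finset.sum_eq_single l]
    · simp only [Pi.single_eq_same]
      fin_cases i <;> fin_cases j <;> simp [Matrix.single]
    · intro b _ hb
      simp [hb.symm]
    · simp

/-- Sum over the dihedral group. -/
noncomputable def N (F : Type) [Field F] : MonoidAlgebra F G :=
  ∑ d : DihedralGroup 5, MonoidAlgebra.single ((1, d) : G) 1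

lemma single_mul_N (c : Multiplicative (ZMod 3)) (d : DihedralGroup 5) (a : F) :
    MonoidAlgebra.single ((c, d) : G) a * N F = MonoidAlgebra.single ((c, 1) : G) a * N F := by
  simp only [N, Finset.mul_sum, MonoidAlgebra.single_mul_single, Prod.mk_mul_mk, mul_one, one_mul]
  exact Fintype.sum_equiv (Equiv.mulLeft d) _ _ fun x => rfl

lemma N_mul_single (c : Multiplicative (ZMod 3)) (d : DihedralGroup 5) (a : F) :
    N F * MonoidAlgebra.single ((c, d) : G) a = MonoidAlgebra.single ((c, 1) : G) a * N F := by
  simp only [N, Finset.mul_sum, Finset.sum_mul, MonoidAlgebra.single_mul_single, Prod.mk_mul_mk,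
    mul_one, one_mul]
  exact Fintype.sum_equiv (Equiv.mulRight d) _ _ fun x => rfl

lemma N_comm (x : MonoidAlgebra F G) : N F * x = x * N F := by
  induction x using MonoidAlgebra.induction_linear with
  | zero => simp
  | add x y hx hy => simp [mul_add, add_mul, hx, hy]
  | single g a => rw [N_mul_single g.1 g.2, ← single_mul_N g.1 g.2]

lemma N_sq : N F * N F = 0 := by
  have h : ∀ d : DihedralGroup 5, MonoidAlgebra.single ((1, d) : G) 1 * N F = N F := by
    intro d
    rw [single_mul_N]
    exact one_mul _
  conv_lhs => enter [1]; rw [N]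
  rw [Finset.sum_mul, Finset.sum_congr rfl fun d _ => h d, Finset.sum_const, Finset.card_univ,
    DihedralGroup.card, ← Nat.cast_smul_eq_nsmul F]
  have : ((2 * 5 : ℕ) : F) = 0 := by
    have h2 : (2 : F) = 0 := CharTwo.two_eq_zero
    rw [Nat.cast_mul, Nat.cast_ofNat, h2, zero_mul]
  rw [this, zero_smul]

/-- `N` times elements of the cyclic part. -/
noncomputable def L (F : Type) [Field F] : (Multiplicative (ZMod 3) → F) →ₗ[F] MonoidAlgebra F G where
  toFun f := (∑ c, MonoidAlgebra.single ((c, 1) : G) (f c)) * N F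
  map_add' f g := by simp [MonoidAlgebra.single_add, Finset.sum_add_distrib, add_mul]
  map_smul' a f := by
    simp only [Pi.smul_apply, ← MonoidAlgebra.smul_single, ← Finset.smul_sum, smul_mul_assoc,
      RingHom.id_apply]

lemma L_inj : Function.Injective (L F) := by
  rw [← LinearMap.ker_eq_bot, LinearMap.ker_eq_bot']
  intro f hf
  ext c
  have h : ((L F f).coeff (c, 1)) = f c := by
    simp only [L, LinearMap.coe_mk, AddHom.coe_mk, N, Finset.sum_mul, Finset.mul_sum,
      MonoidAlgebra.single_mul_single, MonoidAlgebra.coeff_sum, MonoidAlgebra.coeff_single,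
      Finsupp.finsetSum_apply, Finsupp.single_apply, Prod.mk_mul_mk, mul_one, one_mul,
      Prod.mk.injEq]
    rw [Finset.sum_eq_single 1]
    · simp
    · intro b _ hb; simp [hb]
    · simp
  rw [hf] at h
  simpa using h.symm

lemma phi_N : phi w hw (N F) = 0 := by
  have h2 : (2 : F) = 0 := CharTwo.two_eq_zero
  simp only [N, map_sum, phi, MonoidAlgebra.lift_single, one_smul]
  rw [← Equiv.sum_comp (DihedralGroup.equivSum (n := 5)).symm, Fintype.sum_sum_type]
  simp only [psi_apply]
  have e1 : ∀ f : ZMod 5 → B F, ∑ i, f i = f 0 + f 1 + f 2 + f 3 + f 4 :=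
    fun f => Fin.sum_univ_five f
  have v1 : (1 : ZMod 5).val = 1 := rfl
  have v2 : (2 : ZMod 5).val = 2 := rfl
  have v3 : (3 : ZMod 5).val = 3 := rfl
  have v4 : (4 : ZMod 5).val = 4 := rfl
  rw [e1, e1]
  refine Prod.ext (funext fun i => ?_) (funext fun k => ?_)
  · simp [DihedralGroup.equivSum]
    grind
  · have h := Rsum (a6_eq hw k)
    have h' : S * (1 + R (a6 w k) + R (a6 w k) ^ 2 + R (a6 w k) ^ 3 + R (a6 w k) ^ 4) = 0 := by
      rw [h, mul_zero]
    simp only [mul_add, mul_one] at h'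
    simp [DihedralGroup.equivSum, rhoFun, v1, v2, v3, v4, h, h', -DihedralGroup.r_zero]

lemma phi_L (f) : phi w hw (L F f) = 0 := by
  simp [L, phi_N hw]

instance : FiniteDimensional F (MonoidAlgebra F G) :=
  Module.Finite.equiv (MonoidAlgebra.coeffLinearEquiv F (S := F) (M := G)).symm

lemma ker_eq : LinearMap.range (L F) = LinearMap.ker (phi w hw).toLinearMap := by
  apply Submodule.eq_of_le_of_finrank_eq
  · rintro _ ⟨f, rfl⟩
    exact phi_L hw f
  · have h1 := LinearMap.finrank_range_add_finrank_ker (phi w hw).toLinearMap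
    rw [LinearMap.range_eq_top.2 (phi_surj hw), finrank_top,
      (MonoidAlgebra.coeffLinearEquiv F (S := F) (M := G)).finrank_eq] at h1
    rw [LinearMap.finrank_range_of_inj L_inj]
    have e3 : Fintype.card (Multiplicative (ZMod 3)) = 3 := rfl
    simp [DihedralGroup.card, Module.finrank_matrix, Module.finrank_pi_fintype, e3] at h1 ⊢
    omega

end
end S5

/-- For `F` a finite field of characteristic 2 with `q ≡ 1, 4 (mod 15)` and
`G = C₃ × D₁₀`, we have `FG/J(FG) ≅ F³ ⊕ M₂(F)⁶` as `F`-algebras, stated as the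
existence of a surjective `F`-algebra map onto `F³ × M₂(F)⁶` with kernel `J(FG)`. -/
theorem stmt_5 (F : Type) [Field F] [Fintype F] (hchar : CharP F 2)
    (hq : Fintype.card F % 15 = 1 ∨ Fintype.card F % 15 = 4) :
    let G := Multiplicative (ZMod 3) × DihedralGroup 5
    ∃ φ : MonoidAlgebra F G →ₐ[F]
        ((Fin 3 → F) × (Fin 6 → Matrix (Fin 2) (Fin 2) F)),
      Function.Surjective φ ∧
      RingHom.ker φ.toRingHom = Ideal.jacobson (⊥ : Ideal (MonoidAlgebra F G)) := by
  intro G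
  obtain ⟨w, hw⟩ := S5.exists_omega hq
  refine ⟨S5.phi w hw, S5.phi_surj hw, le_antisymm ?_ ?_⟩
  · intro x hx
    have hker : ∀ u : MonoidAlgebra F G, S5.phi w hw u = 0 → u * u = 0 := by
      intro u hu
      have : u ∈ LinearMap.range (S5.L F) := by
        rw [S5.ker_eq hw]; exact hu
      obtain ⟨f, rfl⟩ := this
      simp only [S5.L, LinearMap.coe_mk, AddHom.coe_mk]
      rw [mul_assoc, ← mul_assoc (S5.N F), S5.N_comm, mul_assoc _ (S5.N F), S5.N_sq, mul_zero,
        mul_zero]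
    have hx' : S5.phi w hw x = 0 := hx
    rw [Ideal.mem_jacobson_iff]
    intro y
    have hu := hker (y * x) (by rw [map_mul, hx', mul_zero])
    refine ⟨1 - y * x, ?_⟩
    rw [Ideal.mem_bot]
    have : (1 - y * x) * y * x + (1 - y * x) - 1 = - ((y * x) * (y * x)) := by
      rw [mul_assoc, sub_mul, one_mul]; abel
    rw [this, hu, neg_zero]
  · have : RingHomSurjective (S5.phi w hw).toRingHom := ⟨S5.phi_surj hw⟩
    rw [Ideal.jacobson_bot]
    have h := Ring.le_comap_jacobson (S5.phi w hw).toRingHom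
    rw [IsSemisimpleRing.jacobson_eq_bot (S5.B F)] at h
    exact h
end

section
/- Let F be a finite field with q elements, q ≡ 2 or 8 (mod 15), of characteristic 2. Then FG/J(FG) ≅ F ⊕ F₂ ⊕ M₂(F₂)³ as F-algebras, where G = C_3 × D_10 and F₂ denotes the quadratic field extension of F. -/
/-- A homomorphism out of the dihedral group of order ten, from generators and relations. -/
def dihHom {M : Type*} [Monoid M] (R S : M) (hR : R ^ 5 = 1) (hS : S * S = 1)
    (hRS : R * S * R = S) : DihedralGroup 5 →* M :=
  have hadd : ∀ i j : ZMod 5, R ^ (i + j).val = R ^ i.val * R ^ j.val := fun i j => by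
    rw [ZMod.val_add, ← pow_add, pow_eq_pow_mod (i.val + j.val) hR]
  have hconj : ∀ n : ℕ, R ^ n * S * R ^ n = S := fun n => by
    induction n with
    | zero => simp
    | succ k ih =>
      calc R ^ (k + 1) * S * R ^ (k + 1) = R ^ k * (R * S * R) * R ^ k := by
            rw [pow_succ' R k]
            nth_rewrite 1 [(Commute.refl R).pow_right k |>.eq]
            simp only [mul_assoc]
        _ = S := by rw [hRS, ih]
  { toFun := fun g => match g with
      | .r i => R ^ i.val
      | .sr i => S * R ^ i.val
    map_one' := by
      change R ^ (0 : ZMod 5).val = 1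
      simp
    map_mul' := by
      rintro (i | i) (j | j)
      · exact hadd i j
      · change S * R ^ (j - i).val = R ^ i.val * (S * R ^ j.val)
        conv_rhs => rw [show j = i + (j - i) by ring, hadd, ← mul_assoc, ← mul_assoc, hconj]
      · change S * R ^ (i + j).val = S * R ^ i.val * R ^ j.val
        rw [hadd, mul_assoc]
      · change R ^ (j - i).val = S * R ^ i.val * (S * R ^ j.val)
        have e : R ^ j.val = R ^ i.val * R ^ (j - i).val := by rw [← hadd]; congr 2; ring
        calc R ^ (j - i).val = S * (R ^ i.val * S * R ^ i.val) * R ^ (j - i).val := by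
              rw [hconj, hS, one_mul]
          _ = S * R ^ i.val * (S * R ^ j.val) := by rw [e]; simp only [mul_assoc] }

/-- A homomorphism out of the cyclic group of order three. -/
def cycHom {M : Type*} [Monoid M] (C : M) (hC : C ^ 3 = 1) : Multiplicative (ZMod 3) →* M where
  toFun c := C ^ (Multiplicative.toAdd c).val
  map_one' := by
    change C ^ (0 : ZMod 3).val = 1
    simp
  map_mul' c d := by
    change C ^ (Multiplicative.toAdd c + Multiplicative.toAdd d).val = _
    rw [ZMod.val_add, ← pow_add, ← pow_eq_pow_mod _ hC]

/-- The group of the statement. -/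
abbrev Grp := Multiplicative (ZMod 3) × DihedralGroup 5

theorem exists_hom {M : Type*} [Monoid M] (C R S : M) (hC : C ^ 3 = 1) (hR : R ^ 5 = 1)
    (hS : S * S = 1) (hRS : R * S * R = S) (hCR : Commute C R) (hCS : Commute C S) :
    ∃ f : Grp →* M, (∀ c : Multiplicative (ZMod 3), ∀ d, f (c, d) = f (c, 1) * f (1, d)) ∧
      f (Multiplicative.ofAdd 1, 1) = C ∧
      (∀ i : ZMod 5, f (1, .r i) = R ^ i.val) ∧ (∀ i : ZMod 5, f (1, .sr i) = S * R ^ i.val) := by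
  refine ⟨MonoidHom.noncommCoprod (cycHom C hC) (dihHom R S hR hS hRS) ?_, ?_, ?_, ?_, ?_⟩
  · rintro c (i | i)
    · exact (hCR.pow_pow _ _)
    · exact ((hCS.mul_right (hCR.pow_right _)).pow_left _)
  · intro c d
    simp
  · simp [cycHom, ZMod.val_one]
  · intro i
    simp [dihHom]
  · intro i
    simp [dihHom]

theorem sum_dih {M : Type*} [Ring M] (f : DihedralGroup 5 → M) (R S : M)
    (h1 : ∀ i : ZMod 5, f (.r i) = R ^ i.val) (h2 : ∀ i : ZMod 5, f (.sr i) = S * R ^ i.val) :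
    ∑ d, f d = (1 + S) * (1 + R + R ^ 2 + R ^ 3 + R ^ 4) := by
  have : ∑ d, f d = ∑ x : ZMod 5 ⊕ ZMod 5, f (DihedralGroup.equivSum.symm x) :=
    (Equiv.sum_comp DihedralGroup.equivSum.symm f).symm
  rw [this, Fintype.sum_sum_type]
  have e1 : ∀ i : ZMod 5, f (DihedralGroup.equivSum.symm (Sum.inl i)) = R ^ i.val := h1
  have e2 : ∀ i : ZMod 5, f (DihedralGroup.equivSum.symm (Sum.inr i)) = S * R ^ i.val := h2
  simp only [e1, e2, ← Finset.mul_sum]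
  have : ∑ i : ZMod 5, R ^ i.val = 1 + R + R ^ 2 + R ^ 3 + R ^ 4 := by
    rw [show (∑ i : ZMod 5, R ^ i.val) = ∑ i : Fin 5, R ^ (i : ℕ) from rfl]
    simp [Fin.sum_univ_five]
  rw [this]
  noncomm_ring

section sigma
variable (F : Type) [Field F]

/-- The sum of the coset of the dihedral group attached to `c`. -/
noncomputable def sig (c : Multiplicative (ZMod 3)) : MonoidAlgebra F Grp :=
  ∑ d : DihedralGroup 5, MonoidAlgebra.single (c, d) 1

theorem sig_mul [CharP F 2] (c c' : Multiplicative (ZMod 3)) : sig F c * sig F c' = 0 := by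
  have key : ∀ e : DihedralGroup 5,
      (MonoidAlgebra.single (c, e) (1 : F) : MonoidAlgebra F Grp) * sig F c' = sig F (c * c') := by
    intro e
    unfold sig
    rw [Finset.mul_sum]
    refine Fintype.sum_equiv (Equiv.mulLeft e) _ _ fun d => ?_
    rw [MonoidAlgebra.single_mul_single]
    simp
  have h : sig F c * sig F c' = ∑ e : DihedralGroup 5,
      (MonoidAlgebra.single (c, e) (1 : F) : MonoidAlgebra F Grp) * sig F c' := by
    conv_lhs => rw [sig]
    rw [Finset.sum_mul]
  rw [h, Finset.sum_congr rfl fun e _ => key e, Finset.sum_const, Finset.card_univ,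
    DihedralGroup.card, ← Nat.cast_smul_eq_nsmul F]
  have : ((2 * 5 : ℕ) : F) = 0 := by
    rw [Nat.cast_mul, CharP.cast_eq_zero F 2, zero_mul]
  rw [this, zero_smul]

theorem sig_indep : LinearIndependent F (sig F) := by
  rw [Fintype.linearIndependent_iff]
  intro g hg i
  have h := congrArg (fun x : MonoidAlgebra F Grp => x.coeff (i, 1)) hg
  have hs : ∀ k, (sig F k).coeff (i, 1) = if k = i then 1 else 0 := by
    intro k
    simp only [sig, MonoidAlgebra.coeff_sum, Finset.sum_apply', MonoidAlgebra.coeff_single,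
      Finsupp.single_apply, Prod.ext_iff]
    by_cases hk : k = i <;> simp [hk]
  simpa [hs] using h

end sigma

theorem exists_omega (F : Type) [Field F] [Fintype F]
    (hq : Fintype.card F % 15 = 2 ∨ Fintype.card F % 15 = 8)
    (K : Type) [Field K] [Algebra F K] (hK : Module.finrank F K = 2) :
    ∃ w : K, w ^ 2 + w + 1 = 0 ∧ ∀ b : K, ∃ x y : F, b = algebraMap F K x + algebraMap F K y * w := by
  have : FiniteDimensional F K := Module.finite_of_finrank_pos (by omega)
  have : Finite K := Module.finite_of_finite F
  have := Fintype.ofFinite K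
  classical
  have hcard : Fintype.card K = Fintype.card F ^ 2 := by
    rw [← hK]; exact Module.card_eq_pow_finrank
  have hdvd : 3 ∣ Fintype.card Kˣ := by
    rw [Fintype.card_units, hcard]
    have h3 : Fintype.card F % 3 = 2 := by omega
    obtain ⟨m, hm⟩ : ∃ m, Fintype.card F = 3 * m + 2 := ⟨Fintype.card F / 3, by omega⟩
    rw [hm]
    refine ⟨3 * m ^ 2 + 4 * m + 1, ?_⟩
    have : (3 * m + 2) ^ 2 = 3 * (3 * m ^ 2 + 4 * m + 1) + 1 := by ring
    omega
  have : Fact (Nat.Prime 3) := ⟨Nat.prime_three⟩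
  obtain ⟨u, hu⟩ := exists_prime_orderOf_dvd_card 3 hdvd
  have hu3 : (u : K) ^ 3 = 1 := by
    have := pow_orderOf_eq_one u
    rw [hu] at this
    simpa using congrArg Units.val this
  have hu1 : (u : K) ≠ 1 := by
    intro h
    have : u = 1 := Units.ext h
    rw [this, orderOf_one] at hu
    omega
  have hnot : ∀ a : F, algebraMap F K a ≠ u := by
    intro a ha
    apply hu1
    rw [← ha] at hu3 ⊢
    have ha3 : a ^ 3 = 1 := by
      apply (algebraMap F K).injective
      simpa using hu3
    have hq' := FiniteField.pow_card a
    obtain ⟨m, hm⟩ : ∃ m, Fintype.card F = 3 * m + 2 := ⟨Fintype.card F / 3, by omega⟩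
    rw [hm, pow_add, pow_mul, ha3, one_pow, one_mul] at hq'
    have hane : a ≠ 0 := by
      rintro rfl
      norm_num at ha3
    have : a = 1 := by
      have : a * (a - 1) = 0 := by linear_combination hq'
      rcases mul_eq_zero.1 this with h | h
      · exact absurd h hane
      · exact sub_eq_zero.1 h
    rw [this, map_one]
  refine ⟨u, ?_, ?_⟩
  · have : ((u : K) - 1) * ((u : K) ^ 2 + u + 1) = 0 := by linear_combination hu3
    exact (mul_eq_zero.1 this).resolve_left (sub_ne_zero.2 hu1)
  · have hli : LinearIndependent F ![(1 : K), u] := by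
      rw [LinearIndependent.pair_iff' one_ne_zero]
      intro a ha
      exact hnot a (by rw [← ha, Algebra.smul_def, mul_one])
    have hspan := hli.span_eq_top_of_card_eq_finrank' (by simp [hK])
    intro b
    have hb : b ∈ Submodule.span F (Set.range ![(1 : K), u]) := hspan ▸ Submodule.mem_top
    simp only [Matrix.range_cons, Matrix.range_empty, Set.union_empty, Set.singleton_union] at hb
    obtain ⟨x, y, h⟩ := Submodule.mem_span_pair.1 hb
    exact ⟨x, y, by rw [← h, Algebra.smul_def, Algebra.smul_def, mul_one]⟩

section gens
variable (F K : Type) [Field F] [Field K]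

/-- The target algebra. -/
abbrev Tgt := F × K × (Fin 3 → Matrix (Fin 2) (Fin 2) K)

variable {K}
/-- An element of the target given by its components. -/
def gP (a : F) (b : K) (x y z : Matrix (Fin 2) (Fin 2) K) : Tgt F K := (a, b, ![x, y, z])

@[simp] theorem gP_fst (a : F) (b : K) (x y z) : (gP F a b x y z).1 = a := rfl
@[simp] theorem gP_snd (a : F) (b : K) (x y z) : (gP F a b x y z).2.1 = b := rfl
@[simp] theorem gP_zero (a : F) (b : K) (x y z) : (gP F a b x y z).2.2 0 = x := rfl
@[simp] theorem gP_one (a : F) (b : K) (x y z) : (gP F a b x y z).2.2 1 = y := rfl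
@[simp] theorem gP_two (a : F) (b : K) (x y z) : (gP F a b x y z).2.2 2 = z := rfl

/-- Image of the generator of the cyclic group. -/
def gC (w : K) : Tgt F K := gP F 1 w 1 !![w, 0; 0, w] !![w + 1, 0; 0, w + 1]
/-- Image of the rotation. -/
def gR (w : K) : Tgt F K := (1, 1, fun _ => !![0, 1; 1, w])
/-- Image of the reflection. -/
def gS : Tgt F K := (1, 1, fun _ => !![0, 1; 1, 0])
/-- Image of the sum of the rotation and its inverse. -/
def gT (w : K) : Tgt F K := (0, 0, fun _ => !![w, 0; 0, w])
/-- Matrices placed diagonally. -/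
def gD (X : Matrix (Fin 2) (Fin 2) K) : Tgt F K := (0, 0, fun _ => X)

theorem fin2 (i : Fin 2) : i = 0 ∨ i = 1 := by omega

theorem fin3 (i : Fin 3) : i = 0 ∨ i = 1 ∨ i = 2 := by omega

theorem tgt_ext {x y : Tgt F K} (h1 : x.1 = y.1) (h2 : x.2.1 = y.2.1)
    (h3 : ∀ i j k, x.2.2 i j k = y.2.2 i j k) : x = y :=
  Prod.ext h1 (Prod.ext h2 (funext fun i => Matrix.ext fun j k => h3 i j k))

theorem gC_pow (w : K) (hw : w ^ 2 + w + 1 = 0) (h2 : (2 : K) = 0) : gC F w ^ 3 = 1 := by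
  rw [pow_succ, pow_two]
  apply tgt_ext
  · simp [gC]
  · simp [gC]; grind
  · intro i j k
    rcases fin3 i with rfl | rfl | rfl <;> rcases fin2 j with rfl | rfl <;> rcases fin2 k with rfl | rfl <;>
      simp [gC, Matrix.mul_apply, Fin.sum_univ_two] <;> grind

theorem gR_pow_two (w : K) (hw : w ^ 2 + w + 1 = 0) (h2 : (2 : K) = 0) :
    gR F w ^ 2 = (1, 1, fun _ => !![1, w; w, w]) := by
  rw [pow_two]
  apply tgt_ext
  · simp [gR]
  · simp [gR]
  · intro i j k
    rcases fin2 j with rfl | rfl <;> rcases fin2 k with rfl | rfl <;> simp [gR, Matrix.mul_apply, Fin.sum_univ_two] <;> grind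

theorem gR_pow_three (w : K) (hw : w ^ 2 + w + 1 = 0) (h2 : (2 : K) = 0) :
    gR F w ^ 3 = (1, 1, fun _ => !![w, w; w, 1]) := by
  rw [pow_succ, gR_pow_two F w hw h2]
  apply tgt_ext
  · simp [gR]
  · simp [gR]
  · intro i j k
    rcases fin2 j with rfl | rfl <;> rcases fin2 k with rfl | rfl <;> simp [gR, Matrix.mul_apply, Fin.sum_univ_two] <;> grind

theorem gR_pow_four (w : K) (hw : w ^ 2 + w + 1 = 0) (h2 : (2 : K) = 0) :
    gR F w ^ 4 = (1, 1, fun _ => !![w, 1; 1, 0]) := by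
  rw [pow_succ, gR_pow_three F w hw h2]
  apply tgt_ext
  · simp [gR]
  · simp [gR]
  · intro i j k
    rcases fin2 j with rfl | rfl <;> rcases fin2 k with rfl | rfl <;> simp [gR, Matrix.mul_apply, Fin.sum_univ_two] <;> grind

theorem gR_pow_five (w : K) (hw : w ^ 2 + w + 1 = 0) (h2 : (2 : K) = 0) : gR F w ^ 5 = 1 := by
  rw [pow_succ, gR_pow_four F w hw h2]
  apply tgt_ext
  · simp [gR]
  · simp [gR]
  · intro i j k
    rcases fin2 j with rfl | rfl <;> rcases fin2 k with rfl | rfl <;> simp [gR, Matrix.mul_apply, Fin.sum_univ_two] <;> grind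

theorem gS_sq : gS F * gS F = (1 : Tgt F K) := by
  apply tgt_ext
  · simp [gS]
  · simp [gS]
  · intro i j k
    rcases fin2 j with rfl | rfl <;> rcases fin2 k with rfl | rfl <;> simp [gS, Matrix.mul_apply, Fin.sum_univ_two]

theorem gRSR (w : K) (h2 : (2 : K) = 0) : gR F w * gS F * gR F w = gS F := by
  apply tgt_ext
  · simp [gS, gR]
  · simp [gS, gR]
  · intro i j k
    rcases fin2 j with rfl | rfl <;> rcases fin2 k with rfl | rfl <;> simp [gS, gR, Matrix.mul_apply, Fin.sum_univ_two] <;> grind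

theorem gCR (w : K) : Commute (gC F w) (gR F w) := by
  apply tgt_ext
  · simp [gC, gR]
  · simp [gC, gR]
  · intro i j k
    rcases fin3 i with rfl | rfl | rfl <;> rcases fin2 j with rfl | rfl <;> rcases fin2 k with rfl | rfl <;>
      simp [gC, gR, Matrix.mul_apply, Fin.sum_univ_two] <;> grind

theorem gCS (w : K) : Commute (gC F w) (gS F) := by
  apply tgt_ext
  · simp [gC, gS]
  · simp [gC, gS]
  · intro i j k
    rcases fin3 i with rfl | rfl | rfl <;> rcases fin2 j with rfl | rfl <;> rcases fin2 k with rfl | rfl <;>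
      simp [gC, gS, Matrix.mul_apply, Fin.sum_univ_two]

theorem gsum (w : K) (hw : w ^ 2 + w + 1 = 0) (h2 : (2 : K) = 0) (h2F : (2 : F) = 0) :
    (1 + gS F) * (1 + gR F w + gR F w ^ 2 + gR F w ^ 3 + gR F w ^ 4) = 0 := by
  rw [gR_pow_two F w hw h2, gR_pow_three F w hw h2, gR_pow_four F w hw h2]
  apply tgt_ext
  · simp [gS, gR]; grind
  · simp [gS, gR]; grind
  · intro i j k
    rcases fin2 j with rfl | rfl <;> rcases fin2 k with rfl | rfl <;> simp [gS, gR, Matrix.mul_apply, Fin.sum_univ_two] <;> grind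

theorem gT_eq (w : K) (hw : w ^ 2 + w + 1 = 0) (h2 : (2 : K) = 0) (h2F : (2 : F) = 0) :
    gT F w = gR F w + gR F w ^ 4 := by
  rw [gR_pow_four F w hw h2]
  apply tgt_ext
  · simp [gT, gR]; grind
  · simp [gT, gR]; grind
  · intro i j k
    rcases fin2 j with rfl | rfl <;> rcases fin2 k with rfl | rfl <;> simp [gT, gR] <;> grind

theorem mem_all [Algebra F K] (w : K) (hw : w ^ 2 + w + 1 = 0) (h2 : (2 : K) = 0)
    (h2F : (2 : F) = 0)
    (hb : ∀ b : K, ∃ x y : F, b = algebraMap F K x + algebraMap F K y * w)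
    (A : Subalgebra F (Tgt F K)) (hC : gC F w ∈ A) (hR : gR F w ∈ A) (hS : gS F ∈ A)
    (z : Tgt F K) : z ∈ A := by
  have hT : gT F w ∈ A := by
    rw [gT_eq F w hw h2 h2F]
    exact add_mem hR (pow_mem hR 4)
  have hT2 : gD F !![w + 1, 0; 0, w + 1] ∈ A := by
    convert mul_mem hT hT using 1
    apply tgt_ext
    · simp [gT, gD]
    · simp [gT, gD]
    · intro i j k
      rcases fin2 j with rfl | rfl <;> rcases fin2 k with rfl | rfl <;> simp [gT, gD, Matrix.mul_apply, Fin.sum_univ_two] <;> grind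
  have hT3 : gD F (1 : Matrix (Fin 2) (Fin 2) K) ∈ A := by
    convert mul_mem hT2 hT using 1
    apply tgt_ext
    · simp [gT, gD]
    · simp [gT, gD]
    · intro i j k
      rcases fin2 j with rfl | rfl <;> rcases fin2 k with rfl | rfl <;> simp [gT, gD, Matrix.mul_apply, Fin.sum_univ_two] <;> grind
  have hf : gP F 1 (0 : K) 1 0 0 ∈ A := by
    convert add_mem (add_mem (one_mem A) hC) (mul_mem hC hC) using 1
    apply tgt_ext
    · simp [gC]; grind
    · simp [gC]; grind
    · intro i j k
      rcases fin3 i with rfl | rfl | rfl <;> rcases fin2 j with rfl | rfl <;> rcases fin2 k with rfl | rfl <;>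
        simp [gC, Matrix.mul_apply, Fin.sum_univ_two] <;> grind
  have hP0 : gP F 0 (0 : K) 1 0 0 ∈ A := by
    convert mul_mem hT3 hf using 1
    apply tgt_ext
    · simp [gD]
    · simp [gD]
    · intro i j k
      rcases fin3 i with rfl | rfl | rfl <;> rcases fin2 j with rfl | rfl <;> rcases fin2 k with rfl | rfl <;>
        simp [gD, Matrix.mul_apply, Fin.sum_univ_two]
  have hF1 : ((1, 0, 0) : Tgt F K) ∈ A := by
    convert sub_mem hf hP0 using 1
    apply tgt_ext
    · simp
    · simp
    · intro i j k
      rcases fin3 i with rfl | rfl | rfl <;> rcases fin2 j with rfl | rfl <;> rcases fin2 k with rfl | rfl <;> simp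
  have hK1 : ((0, 1, 0) : Tgt F K) ∈ A := by
    convert sub_mem (sub_mem (one_mem A) hF1) hT3 using 1
    apply tgt_ext
    · simp [gD]
    · simp [gD]
    · intro i j k
      simp [gD]
  have hP12 : gP F 0 (0 : K) 0 1 1 ∈ A := by
    convert sub_mem hT3 hP0 using 1
    apply tgt_ext
    · simp [gD]
    · simp [gD]
    · intro i j k
      rcases fin3 i with rfl | rfl | rfl <;> rcases fin2 j with rfl | rfl <;> rcases fin2 k with rfl | rfl <;> simp [gD]
  have hP2 : gP F 0 (0 : K) 0 0 1 ∈ A := by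
    convert mul_mem hP12 (add_mem hC hT) using 1
    apply tgt_ext
    · simp [gC, gT]
    · simp [gC, gT]
    · intro i j k
      rcases fin3 i with rfl | rfl | rfl <;> rcases fin2 j with rfl | rfl <;> rcases fin2 k with rfl | rfl <;>
        simp [gC, gT, Matrix.mul_apply, Fin.sum_univ_two] <;> grind
  have hP1 : gP F 0 (0 : K) 0 1 0 ∈ A := by
    convert sub_mem hP12 hP2 using 1
    apply tgt_ext
    · simp
    · simp
    · intro i j k
      rcases fin3 i with rfl | rfl | rfl <;> rcases fin2 j with rfl | rfl <;> rcases fin2 k with rfl | rfl <;> simp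
  have hE22 : gD F !![0, 0; 0, (1 : K)] ∈ A := by
    convert mul_mem hT2 (add_mem hR hS) using 1
    apply tgt_ext
    · simp [gD]
    · simp [gD]
    · intro i j k
      rcases fin2 j with rfl | rfl <;> rcases fin2 k with rfl | rfl <;>
        simp [gD, gR, gS, Matrix.mul_apply, Fin.sum_univ_two] <;> grind
  have hE11 : gD F !![(1 : K), 0; 0, 0] ∈ A := by
    convert sub_mem hT3 hE22 using 1
    apply tgt_ext
    · simp [gD]
    · simp [gD]
    · intro i j k
      rcases fin2 j with rfl | rfl <;> rcases fin2 k with rfl | rfl <;> simp [gD]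
  have hE12 : gD F !![0, (1 : K); 0, 0] ∈ A := by
    convert mul_mem hE11 hS using 1
    apply tgt_ext
    · simp [gD]
    · simp [gD]
    · intro i j k
      rcases fin2 j with rfl | rfl <;> rcases fin2 k with rfl | rfl <;> simp [gD, gS, Matrix.mul_apply, Fin.sum_univ_two]
  have hE21 : gD F !![0, 0; (1 : K), 0] ∈ A := by
    convert mul_mem hE22 hS using 1
    apply tgt_ext
    · simp [gD]
    · simp [gD]
    · intro i j k
      rcases fin2 j with rfl | rfl <;> rcases fin2 k with rfl | rfl <;> simp [gD, gS, Matrix.mul_apply, Fin.sum_univ_two]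
  have hscal : ∀ b : K, gD F !![b, 0; 0, b] ∈ A := by
    intro b
    obtain ⟨x, y, rfl⟩ := hb b
    convert add_mem (A.smul_mem hT3 x) (A.smul_mem hT y) using 1
    apply tgt_ext
    · simp [gD, gT]
    · simp [gD, gT]
    · intro i j k
      rcases fin2 j with rfl | rfl <;> rcases fin2 k with rfl | rfl <;> simp [gD, gT] <;>
        simp [Algebra.smul_def]
  have hX : ∀ X : Matrix (Fin 2) (Fin 2) K, gD F X ∈ A := by
    intro X
    convert add_mem (add_mem (mul_mem (hscal (X 0 0)) hE11) (mul_mem (hscal (X 0 1)) hE12))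
      (add_mem (mul_mem (hscal (X 1 0)) hE21) (mul_mem (hscal (X 1 1)) hE22)) using 1
    apply tgt_ext
    · simp [gD]
    · simp [gD]
    · intro i j k
      rcases fin2 j with rfl | rfl <;> rcases fin2 k with rfl | rfl <;> simp [gD, Matrix.mul_apply, Fin.sum_univ_two]
  obtain ⟨a, b, M⟩ := z
  obtain ⟨x, y, rfl⟩ := hb b
  convert add_mem (add_mem (A.smul_mem hF1 a)
    (mul_mem (add_mem (A.smul_mem (one_mem A) x) (A.smul_mem hC y)) hK1))
    (add_mem (add_mem (mul_mem hP0 (hX (M 0))) (mul_mem hP1 (hX (M 1))))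
      (mul_mem hP2 (hX (M 2)))) using 1
  apply tgt_ext
  · simp [gD, gC]
  · simp [gD, gC, Algebra.smul_def]
  · intro i j k
    rcases fin3 i with rfl | rfl | rfl <;> simp [gD, gC]

end gens

/-- For `F` a finite field of characteristic 2 with `q ≡ 2, 8 (mod 15)` and
`G = C₃ × D₁₀`, we have `FG/J(FG) ≅ F ⊕ F₂ ⊕ M₂(F₂)³` as `F`-algebras, where `F₂` is
the quadratic extension of `F`; stated as the existence of a surjective `F`-algebra map
with kernel `J(FG)`. -/
theorem stmt_6 (F : Type) [Field F] [Fintype F] (hchar : CharP F 2)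
    (hq : Fintype.card F % 15 = 2 ∨ Fintype.card F % 15 = 8)
    (K : Type) [Field K] [Algebra F K] (hK : Module.finrank F K = 2) :
    let G := Multiplicative (ZMod 3) × DihedralGroup 5
    ∃ φ : MonoidAlgebra F G →ₐ[F]
        (F × K × (Fin 3 → Matrix (Fin 2) (Fin 2) K)),
      Function.Surjective φ ∧
      RingHom.ker φ.toRingHom = Ideal.jacobson (⊥ : Ideal (MonoidAlgebra F G)) := by
  intro G
  obtain ⟨w, hw, hb⟩ := exists_omega F hq K hK
  have h2F : (2 : F) = 0 := by exact_mod_cast CharP.cast_eq_zero F 2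
  have h2 : (2 : K) = 0 := by
    rw [← map_ofNat (algebraMap F K) 2, h2F, map_zero]
  have : FiniteDimensional F K := Module.finite_of_finrank_pos (by omega)
  obtain ⟨f, hf, hfC, hfr, hfs⟩ := exists_hom (gC F w) (gR F w) (gS F) (gC_pow F w hw h2)
    (gR_pow_five F w hw h2) (gS_sq F) (gRSR F w h2) (gCR F w) (gCS F w)
  let φ : MonoidAlgebra F Grp →ₐ[F] Tgt F K := MonoidAlgebra.lift F (Tgt F K) Grp f
  have hφ : ∀ g, φ (MonoidAlgebra.single g 1) = f g := fun g => by
    simp [φ]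
  have hmem : ∀ g, f g ∈ φ.range := fun g => ⟨_, hφ g⟩
  have hsurj : Function.Surjective φ := by
    intro z
    have : z ∈ φ.range := by
      refine mem_all F w hw h2 h2F hb φ.range ?_ ?_ ?_ z
      · rw [← hfC]; exact hmem _
      · have := hfr 1
        rw [show (1 : ZMod 5).val = 1 from rfl, pow_one] at this
        rw [← this]; exact hmem _
      · have := hfs 0
        rw [ZMod.val_zero, pow_zero, mul_one] at this
        rw [← this]; exact hmem _
    exact this
  have hsig : ∀ c, φ (sig F c) = 0 := by
    intro c
    rw [sig, map_sum]
    simp only [hφ]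
    rw [Finset.sum_congr rfl fun d _ => hf c d, ← Finset.mul_sum,
      sum_dih (fun d => f (1, d)) _ _ hfr hfs, gsum F w hw h2 h2F, mul_zero]
  have hker : LinearMap.ker φ.toLinearMap = Submodule.span F (Set.range (sig F)) := by
    symm
    apply Submodule.eq_of_le_of_finrank_eq
    · rw [Submodule.span_le]
      rintro _ ⟨c, rfl⟩
      exact hsig c
    · rw [finrank_span_eq_card (sig_indep F)]
      have h1 := LinearMap.finrank_range_add_finrank_ker φ.toLinearMap
      rw [LinearMap.range_eq_top.2 hsurj, finrank_top] at h1
      have : Module.Finite F (Matrix (Fin 2) (Fin 2) K) := Module.Finite.matrix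
      have h3 : Module.finrank F (Tgt F K) = 27 := by
        have h6 : Module.finrank F (Matrix (Fin 2) (Fin 2) K) = 8 := by
          rw [Module.finrank_matrix, hK]; simp
        rw [Module.finrank_prod, Module.finrank_prod, Module.finrank_pi_fintype, h6, hK]
        simp
      have h4 : Module.finrank F (MonoidAlgebra F Grp) = 30 := by
        rw [Module.finrank_eq_card_basis (MonoidAlgebra.basis Grp F)]
        simp [DihedralGroup.card]
      have h5 : Fintype.card (Multiplicative (ZMod 3)) = 3 := by simp
      omega
  have hmul : ∀ x y, φ x = 0 → φ y = 0 → x * y = 0 := by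
    intro x y hx hy
    have hx' : x ∈ Submodule.span F (Set.range (sig F)) := hker ▸ hx
    have hy' : y ∈ Submodule.span F (Set.range (sig F)) := hker ▸ hy
    refine Submodule.span_induction₂ (p := fun x y _ _ => x * y = 0) ?_ ?_ ?_ ?_ ?_ ?_ ?_ hx' hy'
    · rintro _ _ ⟨c, rfl⟩ ⟨c', rfl⟩
      exact sig_mul F c c'
    · intros; simp
    · intros; simp
    · intro x y z _ _ _ h1 h2
      rw [add_mul, h1, h2, add_zero]
    · intro x y z _ _ _ h1 h2
      rw [mul_add, h1, h2, add_zero]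
    · intro r x y _ _ h1
      rw [smul_mul_assoc, h1, smul_zero]
    · intro r x y _ _ h1
      rw [mul_smul_comm, h1, smul_zero]
  refine ⟨φ, hsurj, le_antisymm ?_ ?_⟩
  · intro x hx
    have hx0 : φ x = 0 := hx
    rw [Ideal.mem_jacobson_iff]
    intro y
    refine ⟨1 - y * x, ?_⟩
    have h0 : y * x * (y * x) = 0 := hmul _ _ (by simp [hx0]) (by simp [hx0])
    rw [Ideal.mem_bot]
    have : (1 - y * x) * y * x + (1 - y * x) - 1 = - (y * x * (y * x)) := by
      rw [sub_mul, sub_mul, one_mul, mul_assoc (y * x)]; abel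
    rw [this, h0, neg_zero]
  · have hs : Function.Surjective φ.toRingHom := hsurj
    have hj : Ideal.jacobson (⊥ : Ideal (Tgt F K)) = ⊥ := by
      rw [Ideal.jacobson_bot]
      exact IsSemisimpleRing.jacobson_eq_bot _
    have := Ideal.comap_jacobson_of_surjective hs (K := ⊥)
    rw [hj] at this
    change _ ≤ Ideal.comap φ.toRingHom ⊥
    rw [this]
    exact Ideal.jacobson_mono bot_le
end

section
/- Let F be a finite field of characteristic 2 with |F| = 2^k and G = C_3 × D_10. Then the group 1 + J(FG) is an elementary abelian 2-group of order 2^{3k}, i.e., isomorphic to C_2^{3k}. -/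
namespace Stmt7

open MonoidAlgebra

abbrev C3 := Multiplicative (ZMod 3)
abbrev C5 := Multiplicative (ZMod 5)
abbrev GG := C3 × DihedralGroup 5

section
variable (F : Type) [Field F]

abbrev RR := MonoidAlgebra F (C3 × C5)

noncomputable def ee (c : C3) (i : ZMod 5) : RR F := single (c, Multiplicative.ofAdd i) 1

lemma ee_mul (c d : C3) (i j : ZMod 5) : ee F c i * ee F d j = ee F (c * d) (i + j) := by
  simp [ee, single_mul_single, ofAdd_add]

noncomputable def rhoFun : C3 → DihedralGroup 5 → Matrix (Fin 2) (Fin 2) (RR F)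
  | c, .r i => !![ee F c i, 0; 0, ee F c (-i)]
  | c, .sr i => !![0, ee F c (-i); ee F c i, 0]

noncomputable def rho : GG →* Matrix (Fin 2) (Fin 2) (RR F) where
  toFun g := rhoFun F g.1 g.2
  map_one' := by
    rw [Prod.fst_one, Prod.snd_one, DihedralGroup.one_def, Matrix.one_fin_two]
    simp [rhoFun, ee, MonoidAlgebra.one_def, Prod.one_eq_mk]
  map_mul' := by
    rintro ⟨c, i | i⟩ ⟨d, j | j⟩ <;>
    simp [rhoFun, ee_mul, Matrix.mul_fin_two] <;> (try constructor) <;> congr 1 <;> ring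

lemma trace_rho (x : MonoidAlgebra F GG) (c : C3) (j : ZMod 5) :
    (Matrix.trace (MonoidAlgebra.lift F _ GG (rho F) x)).coeff (c, Multiplicative.ofAdd j)
      = x.coeff (c, .r j) + x.coeff (c, .r (-j)) := by
  classical
  induction x using MonoidAlgebra.induction_linear with
  | zero => simp
  | add x y hx hy => simp [hx, hy]; ring
  | single g a =>
    obtain ⟨d, i | i⟩ := g
    · simp [rho, rhoFun, ee, Finsupp.single_apply, Matrix.trace_fin_two, ← ofAdd_neg, neg_eq_iff_eq_neg]
    · simp [rho, rhoFun, ee, Finsupp.single_apply, Matrix.trace_fin_two]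

noncomputable def aug : MonoidAlgebra F GG →ₐ[F] MonoidAlgebra F C3 :=
  MonoidAlgebra.lift F _ GG ((MonoidAlgebra.of F C3).comp (MonoidHom.fst _ _))

lemma aug_coeff (x : MonoidAlgebra F GG) (c : C3) :
    (aug F x).coeff c = ∑ i : ZMod 5, x.coeff (c, .r i) + ∑ i : ZMod 5, x.coeff (c, .sr i) := by
  classical
  induction x using MonoidAlgebra.induction_linear with
  | zero => simp
  | add x y hx hy => simp [hx, hy, Finset.sum_add_distrib]; ring
  | single g a =>
    obtain ⟨d, i | i⟩ := g
    · by_cases h : d = c <;> simp [aug, Finsupp.single_apply, h]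
    · by_cases h : d = c <;> simp [aug, Finsupp.single_apply, h]

variable [CharP F 2]

lemma red_of_odd (G : Type) [CommGroup G] [Finite G] (h : Odd (Nat.card G)) :
    IsReduced (MonoidAlgebra F G) := by
  have : NeZero (Nat.card G : F) := ⟨by
    rw [Ne, CharP.cast_eq_zero_iff F 2]
    exact h.not_two_dvd_nat⟩
  infer_instance

lemma add_eq_zero_char2 {a b : F} (h : a + b = 0) : a = b := by
  have : CharP F 2 := inferInstance
  exact CharTwo.add_eq_zero.1 h

lemma coeff_of_nilp {x : MonoidAlgebra F GG} (h : IsNilpotent x) (c : C3) (j : ZMod 5) :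
    x.coeff (c, .r j) = x.coeff (c, .r (-j)) := by
  have := red_of_odd F (C3 × C5) (by simp; decide)
  have h1 := (Matrix.isNilpotent_trace_of_isNilpotent
    (h.map (MonoidAlgebra.lift F _ GG (rho F)))).eq_zero
  apply add_eq_zero_char2
  rw [← trace_rho, h1]; simp

variable [Finite F]

lemma nilp_of_mem {x : MonoidAlgebra F GG}
    (hx : x ∈ Ideal.jacobson (⊥ : Ideal (MonoidAlgebra F GG))) : IsNilpotent x := by
  have : Module.Finite F (MonoidAlgebra F GG) := inferInstance
  have : IsArtinianRing (MonoidAlgebra F GG) := IsArtinianRing.of_finite F _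
  obtain ⟨n, hn⟩ := IsSemiprimaryRing.isNilpotent (R := MonoidAlgebra F GG)
  rw [Ideal.jacobson_bot] at hx
  exact ⟨n, by simpa [hn] using Ideal.pow_mem_pow hx n⟩

lemma half (a b : ZMod 5) : -(a - 3 * (a + b)) = b - 3 * (a + b) := by
  revert a b; decide

lemma coeff_rot {x : MonoidAlgebra F GG}
    (hx : x ∈ Ideal.jacobson (⊥ : Ideal (MonoidAlgebra F GG))) (c : C3) (a b : ZMod 5) :
    x.coeff (c, .r a) = x.coeff (c, .r b) := by
  have h := coeff_of_nilp F (nilp_of_mem F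
    (Ideal.mul_mem_left _ (single ((1, .r (-(3 * (a + b)))) : GG) 1) hx)) c (a - 3 * (a+b))
  rw [half] at h
  have key : ∀ a' : ZMod 5, ((c, .r (a' - 3 * (a + b))) : GG)
      = (1, .r (-(3 * (a + b)))) * (c, .r a') := by
    intro a'; simp; ring
  rw [key, key, coeff_single_mul_mul, coeff_single_mul_mul] at h
  simpa using h

lemma coeff_ref {x : MonoidAlgebra F GG}
    (hx : x ∈ Ideal.jacobson (⊥ : Ideal (MonoidAlgebra F GG))) (c : C3) (a b : ZMod 5) :
    x.coeff (c, .sr a) = x.coeff (c, .sr b) := by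
  have h := coeff_of_nilp F (nilp_of_mem F
    (Ideal.mul_mem_left _ (single ((1, .sr (3 * (a + b))) : GG) 1) hx)) c (a - 3 * (a+b))
  rw [half] at h
  have key : ∀ a' : ZMod 5, ((c, .r (a' - 3 * (a + b))) : GG)
      = (1, .sr (3 * (a + b))) * (c, .sr a') := by
    intro a'; simp
  rw [key, key, coeff_single_mul_mul, coeff_single_mul_mul] at h
  simpa using h

lemma coeff_all {x : MonoidAlgebra F GG}
    (hx : x ∈ Ideal.jacobson (⊥ : Ideal (MonoidAlgebra F GG))) (c : C3) (d : DihedralGroup 5) :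
    x.coeff (c, d) = x.coeff (c, 1) := by
  rw [DihedralGroup.one_def]
  rcases d with i | i
  · exact coeff_rot F hx c _ _
  · have := red_of_odd F C3 (by simp; decide)
    have h1 := ((nilp_of_mem F hx).map (aug F)).eq_zero
    have h2 := aug_coeff F x c
    rw [h1, Finset.sum_congr rfl (fun j _ => coeff_rot F hx c j 0),
      Finset.sum_congr rfl (fun j _ => coeff_ref F hx c j i)] at h2
    simp only [Finset.sum_const, Finset.card_univ, ZMod.card, nsmul_eq_mul] at h2
    have h5 : ((5 : ℕ) : F) = 1 := by
      have : (2 : F) = 0 := CharTwo.two_eq_zero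
      push_cast; linear_combination 2 * this
    rw [h5, one_mul, one_mul] at h2
    exact (add_eq_zero_char2 F (by simpa using h2.symm)).symm

end

section
variable (F : Type) [Field F]

noncomputable def DD : MonoidAlgebra F GG := ∑ d : DihedralGroup 5, single (1, d) 1

noncomputable def EE : (C3 → F) →+ MonoidAlgebra F GG where
  toFun f := ∑ c : C3, ∑ d : DihedralGroup 5, single (c, d) (f c)
  map_zero' := by simp
  map_add' f g := by simp [single_add, Finset.sum_add_distrib]

lemma EE_coeff (f : C3 → F) (c : C3) (d : DihedralGroup 5) : (EE F f).coeff (c, d) = f c := by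
  classical
  simp [EE, MonoidAlgebra.coeff_sum, Finsupp.finsetSum_apply, Finsupp.single_apply, Prod.ext_iff,
    ite_and]

lemma EE_eq (f : C3 → F) : EE F f = (∑ c : C3, single (c, 1) (f c)) * DD F := by
  simp [EE, DD, Finset.sum_mul, Finset.mul_sum, single_mul_single]
  try exact Finset.sum_comm

lemma DD_single (c : C3) (d : DihedralGroup 5) (a : F) :
    DD F * single (c, d) a = single (c, 1) a * DD F := by
  simp only [DD, Finset.sum_mul, Finset.mul_sum, single_mul_single]
  simp
  exact Fintype.sum_equiv (Equiv.mulRight d) _ _ (fun _ => by simp)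

lemma DD_mul (y : MonoidAlgebra F GG) : ∃ z, DD F * y = z * DD F := by
  induction y using MonoidAlgebra.induction_linear with
  | zero => exact ⟨0, by simp⟩
  | add x y hx hy =>
    obtain ⟨a, ha⟩ := hx
    obtain ⟨b, hb⟩ := hy
    exact ⟨a + b, by rw [mul_add, add_mul, ha, hb]⟩
  | single g a => exact ⟨_, DD_single F g.1 g.2 a⟩

variable [CharP F 2]

lemma DD_sq : DD F * DD F = 0 := by
  have h : ∀ d : DihedralGroup 5, DD F * single (1, d) 1 = DD F := by
    intro d
    rw [DD_single]
    simp [← Prod.one_eq_mk, ← MonoidAlgebra.one_def]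
  conv_lhs => rw [DD, Finset.mul_sum]
  rw [← DD, Finset.sum_congr rfl (fun d _ => h d), Finset.sum_const, Finset.card_univ,
    DihedralGroup.card, ← Nat.cast_smul_eq_nsmul F]
  have : (2 : F) = 0 := CharTwo.two_eq_zero
  have h10 : ((2 * 5 : ℕ) : F) = 0 := by push_cast; linear_combination 5 * this
  rw [h10, zero_smul]

lemma EE_mul_EE (f g : C3 → F) (y : MonoidAlgebra F GG) : EE F f * (y * EE F g) = 0 := by
  rw [EE_eq, EE_eq, ← mul_assoc y, mul_assoc, ← mul_assoc (DD F)]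
  obtain ⟨z, hz⟩ := DD_mul F (y * ∑ c : C3, single (c, 1) (g c))
  rw [hz, mul_assoc z, DD_sq, mul_zero, mul_zero]

lemma EE_mul (f g : C3 → F) : EE F f * EE F g = 0 := by
  simpa using EE_mul_EE F f g 1

lemma EE_mem (f : C3 → F) : EE F f ∈ Ideal.jacobson (⊥ : Ideal (MonoidAlgebra F GG)) := by
  rw [Ideal.mem_jacobson_iff]
  intro y
  refine ⟨1 - y * EE F f, ?_⟩
  rw [Ideal.mem_bot]
  have h : y * EE F f * y * EE F f = 0 := by
    rw [mul_assoc, mul_assoc, EE_mul_EE, mul_zero]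
  simp only [sub_mul, one_mul, h]
  abel

noncomputable def phi : Multiplicative (C3 → F) →* (MonoidAlgebra F GG)ˣ :=
  MonoidHom.toHomUnits
  { toFun := fun f => 1 + EE F f.toAdd
    map_one' := by simp
    map_mul' := fun f g => by
      rw [toAdd_mul, map_add, mul_add, add_mul, add_mul, EE_mul]
      simp [add_assoc] }

lemma phi_val (f : Multiplicative (C3 → F)) :
    (phi F f : MonoidAlgebra F GG) = 1 + EE F f.toAdd := rfl

lemma phi_inj : Function.Injective (phi F) := by
  intro f g h
  have h1 := congrArg Units.val h
  rw [phi_val, phi_val] at h1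
  have h2 := add_left_cancel h1
  apply Multiplicative.toAdd.injective
  funext c
  rw [← EE_coeff F f.toAdd c 1, h2, EE_coeff]

end

lemma target (F : Type) [Field F] [Fintype F] (k : ℕ)
    (hchar : CharP F 2) (hcard : Fintype.card F = 2 ^ k) :
    Nonempty (Multiplicative (C3 → F) ≃* (Fin (3 * k) → Multiplicative (ZMod 2))) := by
  let := ZMod.algebra F 2
  have h1 : Module.finrank (ZMod 2) (C3 → F) = 3 * k := by
    have := Module.card_eq_pow_finrank (K := ZMod 2) (V := C3 → F)
    rw [Fintype.card_fun, hcard, ← pow_mul, ZMod.card] at this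
    have h3 : Fintype.card C3 = 3 := by simp
    rw [h3] at this
    have := Nat.pow_right_injective le_rfl this
    omega
  let e : (C3 → F) ≃ₗ[ZMod 2] (Fin (3 * k) → ZMod 2) :=
    LinearEquiv.ofFinrankEq _ _ (by simp [h1])
  exact ⟨{ toFun := fun f i => Multiplicative.ofAdd (e f.toAdd i)
           invFun := fun g => Multiplicative.ofAdd (e.symm (fun i => (g i).toAdd))
           left_inv := fun f => by simp
           right_inv := fun g => by simp
           map_mul' := fun f g => by funext i; simp }⟩

end Stmt7

/-- For `F` a finite field with `2^k` elements and `G = C₃ × D₁₀`, the group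
`1 + J(FG)` of units is an elementary abelian 2-group of order `2^(3k)`,
i.e. isomorphic to `C₂^(3k)`. -/
theorem stmt_7 (F : Type) [Field F] [Fintype F] (k : ℕ) (hk : 0 < k)
    (hchar : CharP F 2) (hcard : Fintype.card F = 2 ^ k) :
    let G := Multiplicative (ZMod 3) × DihedralGroup 5
    ∃ H : Subgroup (MonoidAlgebra F G)ˣ,
      (∀ u : (MonoidAlgebra F G)ˣ,
        u ∈ H ↔ (u : MonoidAlgebra F G) - 1 ∈ Ideal.jacobson (⊥ : Ideal (MonoidAlgebra F G))) ∧
      Nonempty (H ≃* (Fin (3 * k) → Multiplicative (ZMod 2))) := by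
  intro G
  refine ⟨(Stmt7.phi F).range, ?_, ?_⟩
  · intro u
    constructor
    · rintro ⟨f, rfl⟩
      rw [Stmt7.phi_val, add_sub_cancel_left]
      exact Stmt7.EE_mem F _
    · intro hu
      refine ⟨Multiplicative.ofAdd (fun c => ((u : MonoidAlgebra F G) - 1).coeff (c, 1)), ?_⟩
      apply Units.ext
      rw [Stmt7.phi_val, ← eq_sub_iff_add_eq']
      apply MonoidAlgebra.coeff_injective
      ext ⟨c, d⟩
      rw [Stmt7.EE_coeff, Stmt7.coeff_all F hu c d]
      rfl
  · obtain ⟨e⟩ := Stmt7.target F k hchar hcard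
    exact ⟨(MonoidHom.ofInjective (Stmt7.phi_inj F)).symm.trans e⟩
end

section
/- Let F be a finite field of characteristic 2 with q = 2^k ≡ 2 or 8 (mod 15), and G = C_3 × D_10. Then U(FG) ≅ C_2^{3k} ⋊ (C_{2^k−1} × C_{2^{2k}−1} × GL(2, F₂)³), where F₂ is the degree-2 extension of F. -/
namespace S9
open DihedralGroup

lemma pow_val_add {A : Type*} [Monoid A] {n : ℕ} [NeZero n] {x : A} (hx : x ^ n = 1) (i j : ZMod n) :
    x ^ (i + j).val = x ^ i.val * x ^ j.val := by
  rw [ZMod.val_add, ← pow_eq_pow_mod _ hx, pow_add]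

lemma pow_val_sub {A : Type*} [Monoid A] {x s : A} (hx : x ^ 5 = 1)
    (hxs : x * s = s * x ^ 4) (i j : ZMod 5) :
    x ^ i.val * (s * x ^ j.val) = s * x ^ (j - i).val := by
  have h1 : ∀ n : ℕ, x ^ n * s = s * x ^ (4 * n) := by
    intro n
    induction n with
    | zero => simp
    | succ n ih =>
      rw [pow_succ', mul_assoc, ih, ← mul_assoc, hxs, mul_assoc, ← pow_add]
      congr 2; ring
  have h2 : j - i = j + (4 * i) := by
    have : (5 : ZMod 5) = 0 := rfl
    linear_combination (-i) * this
  have h3 : (4 * i).val = (4 * i.val) % 5 := by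
    rw [ZMod.val_mul]; rfl
  rw [← mul_assoc, h1, mul_assoc, h2, pow_val_add hx, h3, ← pow_eq_pow_mod _ hx, ← pow_add, ← pow_add,
    add_comm]

/-- dihedral hom -/
def dih {A : Type*} [Monoid A] (x s : A) (hx : x ^ 5 = 1) (hs : s * s = 1)
    (hxs : x * s = s * x ^ 4) : DihedralGroup 5 →* A where
  toFun d := match d with
    | r i => x ^ i.val
    | sr i => s * x ^ i.val
  map_one' := by
    rw [one_def]; simp
  map_mul' := by
    rintro (i | i) (j | j)
    · simp [pow_val_add hx]
    · simp [pow_val_sub hx hxs]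
    · simp [pow_val_add hx, mul_assoc]
    · simp only [sr_mul_sr]
      rw [mul_assoc, pow_val_sub hx hxs, ← mul_assoc, hs, one_mul]

/-- the representation of the group -/
def rep {L A : Type*} [CommSemiring L] [Semiring A] [Algebra L A] (c : L) (hc : c ^ 3 = 1)
    (D : DihedralGroup 5 →* A) : Multiplicative (ZMod 3) × DihedralGroup 5 →* A where
  toFun p := c ^ (p.1.toAdd.val) • D p.2
  map_one' := by simp
  map_mul' := by
    rintro ⟨i, d⟩ ⟨j, e⟩
    simp only [Prod.mk_mul_mk, toAdd_mul, map_mul, pow_val_add hc]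
    rw [smul_mul_smul_comm]

/-- coefficient -/
def cf {F L : Type*} [CommSemiring F] [CommSemiring L] [Algebra F L] (c : L)
    (x : MonoidAlgebra F (Multiplicative (ZMod 3) × DihedralGroup 5)) (d : DihedralGroup 5) : L :=
  algebraMap F L (x.coeff (Multiplicative.ofAdd 0, d)) + algebraMap F L (x.coeff (Multiplicative.ofAdd 1, d)) * c
    + algebraMap F L (x.coeff (Multiplicative.ofAdd 2, d)) * c ^ 2

lemma lift_rep {F L A : Type*} [CommSemiring F] [CommSemiring L] [Semiring A] [Algebra L A] [Algebra F L]
    [Algebra F A] [IsScalarTower F L A] (c : L) (hc : c ^ 3 = 1)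
    (D : DihedralGroup 5 →* A) (x : MonoidAlgebra F (Multiplicative (ZMod 3) × DihedralGroup 5)) :
    MonoidAlgebra.lift F A _ (rep c hc D) x = ∑ d, cf c x d • D d := by
  rw [MonoidAlgebra.lift_apply, Finsupp.sum_fintype _ _ (by simp), Fintype.sum_prod_type_right]
  refine Finset.sum_congr rfl fun d _ => ?_
  rw [← Multiplicative.ofAdd.sum_comp]
  change ∑ i : Fin 3, _ = _
  rw [Fin.sum_univ_three]
  simp only [rep, cf, MonoidHom.coe_mk, OneHom.coe_mk, add_smul, mul_smul, algebraMap_smul]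
  congr 1
  congr 1
  · change _ • c ^ 0 • D d = _
    rw [pow_zero, one_smul]; rfl
  · change _ • c ^ 1 • D d = _
    rw [pow_one]; rfl

lemma sum_dih {A : Type*} [AddCommMonoid A] (f : DihedralGroup 5 → A) :
    ∑ d, f d = (f (r 0) + f (r 1) + f (r 2) + f (r 3) + f (r 4)) +
      (f (sr 0) + f (sr 1) + f (sr 2) + f (sr 3) + f (sr 4)) := by
  rw [← equivSum.symm.sum_comp, Fintype.sum_sum_type]
  congr 1
  · change ∑ i : Fin 5, _ = _
    rw [Fin.sum_univ_five]; rfl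
  · change ∑ i : Fin 5, _ = _
    rw [Fin.sum_univ_five]; rfl

open Matrix DualNumber

def dihE (L : Type*) [CommRing L] [CharP L 2] : DihedralGroup 5 →* DualNumber L :=
  dih 1 (1 + ε) (one_pow _) (by
    have := CharTwo.two_eq_zero (R := L)
    ext <;> simp [add_mul, mul_add] <;> linear_combination this) (by simp)

def dihM {K : Type*} [CommRing K] [CharP K 2] (t : K) (ht : t ^ 2 + t + 1 = 0) :
    DihedralGroup 5 →* Matrix (Fin 2) (Fin 2) K :=
  dih !![0,1;1,t] !![0,1;1,0] (by
    have := CharTwo.two_eq_zero (R := K)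
    simp only [pow_succ, pow_zero, one_mul]
    ext i j; fin_cases i <;> fin_cases j <;> simp <;> grind) (by
    ext i j; fin_cases i <;> fin_cases j <;> simp) (by
    have := CharTwo.two_eq_zero (R := K)
    simp only [pow_succ, pow_zero, one_mul]
    ext i j; fin_cases i <;> fin_cases j <;> simp <;> grind)

lemma dihE_eq {L : Type*} [CommRing L] [CharP L 2] (w : DihedralGroup 5 → L)
    (h : ∑ d, w d • dihE L d = 0) :
    w (r 0) + w (r 1) + w (r 2) + w (r 3) + w (r 4) = 0 ∧
    w (sr 0) + w (sr 1) + w (sr 2) + w (sr 3) + w (sr 4) = 0 := by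
  rw [sum_dih] at h
  have h1 := congrArg TrivSqZeroExt.fst h
  have h2 := congrArg TrivSqZeroExt.snd h
  simp [dihE, dih, -r_zero] at h1 h2
  exact ⟨by linear_combination h1 - h2, h2⟩

lemma dihM_eq {K : Type*} [CommRing K] [CharP K 2] (t : K) (ht : t ^ 2 + t + 1 = 0)
    (w : DihedralGroup 5 → K) (h : ∑ d, w d • dihM t ht d = 0) :
    w (r 0) + w (r 2) + t * w (r 3) + t * w (r 4) + w (sr 1) + t * w (sr 2) + t * w (sr 3) + w (sr 4) = 0 ∧ 
    w (r 1) + t * w (r 2) + t * w (r 3) + w (r 4) + w (sr 0) + t * w (sr 1) + t * w (sr 2) + w (sr 3) = 0 ∧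
    w (r 1) + t * w (r 2) + t * w (r 3) + w (r 4) + w (sr 0) + w (sr 2) + t * w (sr 3) + t * w (sr 4) = 0 ∧
    w (r 0) + t * w (r 1) + t * w (r 2) + w (r 3) + w (sr 1) + t * w (sr 2) + t * w (sr 3) + w (sr 4) = 0 := by
  rw [sum_dih] at h
  have h2 := CharTwo.two_eq_zero (R := K)
  have h00 := congrFun (congrFun h 0) 0
  have h01 := congrFun (congrFun h 0) 1
  have h10 := congrFun (congrFun h 1) 0
  have h11 := congrFun (congrFun h 1) 1
  have v0 : (0 : ZMod 5).val = 0 := rfl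
  have v1 : (1 : ZMod 5).val = 1 := rfl
  have v2 : (2 : ZMod 5).val = 2 := rfl
  have v3 : (3 : ZMod 5).val = 3 := rfl
  have v4 : (4 : ZMod 5).val = 4 := rfl
  have e1 : 1 + t * t = t := by linear_combination ht - t * h2
  have e2 : t + t * t = 1 := by linear_combination ht - h2
  have e3 : t + t = 0 := by linear_combination t * h2
  simp [dihM, dih, v0, v1, v2, v3, v4, pow_succ, Matrix.one_fin_two, -r_zero, e1, e2, e3] at h00 h01 h10 h11
  exact ⟨by linear_combination h00, by linear_combination h01, by linear_combination h10, by linear_combination h11⟩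

lemma lin {K : Type*} [CommRing K] (t a0 a1 a2 a3 a4 b0 b1 b2 b3 b4 : K) (hc : (2 : K) = 0)
    (ht : t ^ 2 + t + 1 = 0) (hA : a0 + a1 + a2 + a3 + a4 = 0) (hB : b0 + b1 + b2 + b3 + b4 = 0)
    (h1 : a0 + a2 + t * a3 + t * a4 + b1 + t * b2 + t * b3 + b4 = 0)
    (h2 : a1 + t * a2 + t * a3 + a4 + b0 + t * b1 + t * b2 + b3 = 0)
    (h3 : a1 + t * a2 + t * a3 + a4 + b0 + b2 + t * b3 + t * b4 = 0)
    (h4 : a0 + t * a1 + t * a2 + a3 + b1 + t * b2 + t * b3 + b4 = 0)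
    (k1 : a0 + a2 + (t + 1) * a3 + (t + 1) * a4 + b1 + (t + 1) * b2 + (t + 1) * b3 + b4 = 0)
    (k2 : a1 + (t + 1) * a2 + (t + 1) * a3 + a4 + b0 + (t + 1) * b1 + (t + 1) * b2 + b3 = 0)
    (k3 : a1 + (t + 1) * a2 + (t + 1) * a3 + a4 + b0 + b2 + (t + 1) * b3 + (t + 1) * b4 = 0)
    (k4 : a0 + (t + 1) * a1 + (t + 1) * a2 + a3 + b1 + (t + 1) * b2 + (t + 1) * b3 + b4 = 0) :
    a0 = 0 ∧ a1 = 0 ∧ a2 = 0 ∧ a3 = 0 ∧ a4 = 0 ∧ b0 = 0 ∧ b1 = 0 ∧ b2 = 0 ∧ b3 = 0 ∧ b4 = 0 := by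
  refine ⟨?_, ?_, ?_, ?_, ?_, ?_, ?_, ?_, ?_, ?_⟩
  · linear_combination hA + h1 + h4 + k1 + k4 - (((2)*t^0)*a0 + ((1)*t^0 + (1)*t^1)*a1 + ((2)*t^0 + (1)*t^1)*a2 + ((2)*t^0 + (1)*t^1)*a3 + ((1)*t^0 + (1)*t^1)*a4 + ((2)*t^0)*b1 + ((1)*t^0 + (2)*t^1)*b2 + ((1)*t^0 + (2)*t^1)*b3 + ((2)*t^0)*b4)*hc
  · linear_combination hA + t*h1 + h2 + h3 + (t+1)*k1 + k2 + k3 - (((2)*t^0)*a3 + ((2)*t^0)*a4 + ((2)*t^0)*b2 + ((2)*t^0)*b3)*ht - (((1)*t^0 + (1)*t^1)*a0 + ((2)*t^0)*a1 + ((2)*t^0 + (3)*t^1)*a2 + ((1)*t^0 + (2)*t^1)*a3 + ((2)*t^0)*a4 + ((2)*t^0)*b0 + ((1)*t^0 + (2)*t^1)*b1 + ((1)*t^0 + (1)*t^1)*b2 + ((1)*t^0 + (1)*t^1)*b3 + ((1)*t^0 + (2)*t^1)*b4)*hc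
  · linear_combination hA + t*h1 + t*h2 + t*h3 + h4 + (t+1)*k1 + (t+1)*k2 + (t+1)*k3 + k4 - (((4)*t^0)*a2 + ((6)*t^0)*a3 + ((2)*t^0)*a4 + ((2)*t^0)*b1 + ((4)*t^0)*b2 + ((4)*t^0)*b3 + ((2)*t^0)*b4)*ht - (((2)*t^0 + (1)*t^1)*a0 + ((2)*t^0 + (3)*t^1)*a1 + ((2)*t^1)*a2 + ((1)*t^0 + (2)*t^1)*a4 + ((1)*t^0 + (2)*t^1)*b0 + ((1)*t^0 + (1)*t^1)*b1 + ((2)*t^1)*b2 + ((2)*t^1)*b3 + ((1)*t^0 + (1)*t^1)*b4)*hc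
  · linear_combination hA + h1 + t*h2 + t*h3 + t*h4 + k1 + (t+1)*k2 + (t+1)*k3 + (t+1)*k4 - (((2)*t^0)*a1 + ((6)*t^0)*a2 + ((4)*t^0)*a3 + ((2)*t^0)*b1 + ((4)*t^0)*b2 + ((4)*t^0)*b3 + ((2)*t^0)*b4)*ht - (((2)*t^0 + (1)*t^1)*a0 + ((1)*t^0 + (2)*t^1)*a1 + ((2)*t^1)*a3 + ((2)*t^0 + (3)*t^1)*a4 + ((1)*t^0 + (2)*t^1)*b0 + ((1)*t^0 + (1)*t^1)*b1 + ((2)*t^1)*b2 + ((2)*t^1)*b3 + ((1)*t^0 + (1)*t^1)*b4)*hc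
  · linear_combination hA + h2 + h3 + t*h4 + k2 + k3 + (t+1)*k4 - (((2)*t^0)*a1 + ((2)*t^0)*a2 + ((2)*t^0)*b2 + ((2)*t^0)*b3)*ht - (((1)*t^0 + (1)*t^1)*a0 + ((2)*t^0)*a1 + ((1)*t^0 + (2)*t^1)*a2 + ((2)*t^0 + (3)*t^1)*a3 + ((2)*t^0)*a4 + ((2)*t^0)*b0 + ((1)*t^0 + (2)*t^1)*b1 + ((1)*t^0 + (1)*t^1)*b2 + ((1)*t^0 + (1)*t^1)*b3 + ((1)*t^0 + (2)*t^1)*b4)*hc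
  · linear_combination hB + h2 + h3 + k2 + k3 - (((2)*t^0)*a1 + ((1)*t^0 + (2)*t^1)*a2 + ((1)*t^0 + (2)*t^1)*a3 + ((2)*t^0)*a4 + ((2)*t^0)*b0 + ((1)*t^0 + (1)*t^1)*b1 + ((2)*t^0 + (1)*t^1)*b2 + ((2)*t^0 + (1)*t^1)*b3 + ((1)*t^0 + (1)*t^1)*b4)*hc
  · linear_combination hB + h1 + t*h3 + h4 + k1 + (t+1)*k3 + k4 - (((2)*t^0)*a2 + ((2)*t^0)*a3 + ((2)*t^0)*b3 + ((2)*t^0)*b4)*ht - (((2)*t^0)*a0 + ((1)*t^0 + (2)*t^1)*a1 + ((1)*t^0 + (1)*t^1)*a2 + ((1)*t^0 + (1)*t^1)*a3 + ((1)*t^0 + (2)*t^1)*a4 + ((1)*t^0 + (1)*t^1)*b0 + ((2)*t^0)*b1 + ((2)*t^0 + (3)*t^1)*b2 + ((1)*t^0 + (2)*t^1)*b3 + ((2)*t^0)*b4)*hc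
  · linear_combination hB + t*h1 + h2 + t*h3 + t*h4 + (t+1)*k1 + k2 + (t+1)*k3 + (t+1)*k4 - (((2)*t^0)*a1 + ((4)*t^0)*a2 + ((4)*t^0)*a3 + ((2)*t^0)*a4 + ((4)*t^0)*b2 + ((6)*t^0)*b3 + ((2)*t^0)*b4)*ht - (((1)*t^0 + (2)*t^1)*a0 + ((1)*t^0 + (1)*t^1)*a1 + ((2)*t^1)*a2 + ((2)*t^1)*a3 + ((1)*t^0 + (1)*t^1)*a4 + ((2)*t^0 + (1)*t^1)*b0 + ((2)*t^0 + (3)*t^1)*b1 + ((2)*t^1)*b2 + ((1)*t^0 + (2)*t^1)*b4)*hc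
  · linear_combination hB + t*h1 + t*h2 + h3 + t*h4 + (t+1)*k1 + (t+1)*k2 + k3 + (t+1)*k4 - (((2)*t^0)*a1 + ((4)*t^0)*a2 + ((4)*t^0)*a3 + ((2)*t^0)*a4 + ((2)*t^0)*b1 + ((6)*t^0)*b2 + ((4)*t^0)*b3)*ht - (((1)*t^0 + (2)*t^1)*a0 + ((1)*t^0 + (1)*t^1)*a1 + ((2)*t^1)*a2 + ((2)*t^1)*a3 + ((1)*t^0 + (1)*t^1)*a4 + ((2)*t^0 + (1)*t^1)*b0 + ((1)*t^0 + (2)*t^1)*b1 + ((2)*t^1)*b3 + ((2)*t^0 + (3)*t^1)*b4)*hc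
  · linear_combination hB + h1 + t*h2 + h4 + k1 + (t+1)*k2 + k4 - (((2)*t^0)*a2 + ((2)*t^0)*a3 + ((2)*t^0)*b1 + ((2)*t^0)*b2)*ht - (((2)*t^0)*a0 + ((1)*t^0 + (2)*t^1)*a1 + ((1)*t^0 + (1)*t^1)*a2 + ((1)*t^0 + (1)*t^1)*a3 + ((1)*t^0 + (2)*t^1)*a4 + ((1)*t^0 + (1)*t^1)*b0 + ((2)*t^0)*b1 + ((1)*t^0 + (2)*t^1)*b2 + ((2)*t^0 + (3)*t^1)*b3 + ((2)*t^0)*b4)*hc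

lemma lin' {K : Type*} [CommRing K] [CharP K 2] (t : K) (ht : t ^ 2 + t + 1 = 0)
    (w : DihedralGroup 5 → K)
    (hA : w (r 0) + w (r 1) + w (r 2) + w (r 3) + w (r 4) = 0)
    (hB : w (sr 0) + w (sr 1) + w (sr 2) + w (sr 3) + w (sr 4) = 0)
    (h : w (r 0) + w (r 2) + t * w (r 3) + t * w (r 4) + w (sr 1) + t * w (sr 2) + t * w (sr 3) + w (sr 4) = 0 ∧ 
    w (r 1) + t * w (r 2) + t * w (r 3) + w (r 4) + w (sr 0) + t * w (sr 1) + t * w (sr 2) + w (sr 3) = 0 ∧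
    w (r 1) + t * w (r 2) + t * w (r 3) + w (r 4) + w (sr 0) + w (sr 2) + t * w (sr 3) + t * w (sr 4) = 0 ∧
    w (r 0) + t * w (r 1) + t * w (r 2) + w (r 3) + w (sr 1) + t * w (sr 2) + t * w (sr 3) + w (sr 4) = 0)
    (h' : w (r 0) + w (r 2) + (t + 1) * w (r 3) + (t + 1) * w (r 4) + w (sr 1) + (t + 1) * w (sr 2) + (t + 1) * w (sr 3) + w (sr 4) = 0 ∧ 
    w (r 1) + (t + 1) * w (r 2) + (t + 1) * w (r 3) + w (r 4) + w (sr 0) + (t + 1) * w (sr 1) + (t + 1) * w (sr 2) + w (sr 3) = 0 ∧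
    w (r 1) + (t + 1) * w (r 2) + (t + 1) * w (r 3) + w (r 4) + w (sr 0) + w (sr 2) + (t + 1) * w (sr 3) + (t + 1) * w (sr 4) = 0 ∧
    w (r 0) + (t + 1) * w (r 1) + (t + 1) * w (r 2) + w (r 3) + w (sr 1) + (t + 1) * w (sr 2) + (t + 1) * w (sr 3) + w (sr 4) = 0)
    (d : DihedralGroup 5) : w d = 0 := by
  obtain ⟨h1, h2, h3, h4⟩ := h
  obtain ⟨k1, k2, k3, k4⟩ := h'
  obtain ⟨a0, a1, a2, a3, a4, b0, b1, b2, b3, b4⟩ := lin t (w (r 0)) (w (r 1)) (w (r 2)) (w (r 3)) (w (r 4))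
    (w (sr 0)) (w (sr 1)) (w (sr 2)) (w (sr 3)) (w (sr 4)) CharTwo.two_eq_zero ht hA hB h1 h2 h3 h4 k1 k2 k3 k4
  rcases d with i | i
  · fin_cases i <;> assumption
  · fin_cases i <;> assumption

lemma ht' {K : Type*} [CommRing K] [CharP K 2] {t : K} (ht : t ^ 2 + t + 1 = 0) :
    (t + 1) ^ 2 + (t + 1) + 1 = 0 := by
  linear_combination ht + (t + 1) * CharTwo.two_eq_zero (R := K)

lemma ht3 {K : Type*} [CommRing K] {t : K} (ht : t ^ 2 + t + 1 = 0) : t ^ 3 = 1 := by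
  linear_combination (t - 1) * ht

abbrev Tgt (F K : Type) [Field F] [Field K] : Type :=
  DualNumber F × DualNumber K × (Fin 3 → Matrix (Fin 2) (Fin 2) K)

abbrev G := Multiplicative (ZMod 3) × DihedralGroup 5

section
variable {F K : Type} [Field F] [Field K] [Algebra F K] [CharP F 2] [CharP K 2]

/-- the three matrix representations -/
noncomputable def mats (F : Type) {K : Type} [Field F] [Field K] [Algebra F K] [CharP K 2]
    (t : K) (ht : t ^ 2 + t + 1 = 0) :
    Fin 3 → (MonoidAlgebra F G →ₐ[F] Matrix (Fin 2) (Fin 2) K) :=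
  ![MonoidAlgebra.lift F _ _ (rep (1 : K) (one_pow 3) (dihM t ht)),
    MonoidAlgebra.lift F _ _ (rep t (ht3 ht) (dihM t ht)),
    MonoidAlgebra.lift F _ _ (rep t (ht3 ht) (dihM (t + 1) (ht' ht)))]

noncomputable def Phi (F : Type) {K : Type} [Field F] [Field K] [Algebra F K] [CharP F 2] [CharP K 2]
    (t : K) (ht : t ^ 2 + t + 1 = 0) : MonoidAlgebra F G →+* Tgt F K :=
  RingHom.prod (MonoidAlgebra.lift F (DualNumber F) G (rep (1 : F) (one_pow 3) (dihE F))).toRingHom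
    (RingHom.prod (MonoidAlgebra.lift F (DualNumber K) G (rep t (ht3 ht) (dihE K))).toRingHom
      (RingHom.pi fun i => (mats F t ht i).toRingHom))

lemma Phi_inj (t : K) (ht : t ^ 2 + t + 1 = 0) (σ : K →ₐ[F] K) (hσ : σ t = t + 1) :
    Function.Injective (Phi F t ht) := by
  rw [injective_iff_map_eq_zero]
  intro x hx
  have e1 : MonoidAlgebra.lift F (DualNumber F) G (rep (1 : F) (one_pow 3) (dihE F)) x = 0 :=
    congrArg (fun z : Tgt F K => z.1) hx
  have e2 : MonoidAlgebra.lift F (DualNumber K) G (rep t (ht3 ht) (dihE K)) x = 0 :=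
    congrArg (fun z : Tgt F K => z.2.1) hx
  have m0 : MonoidAlgebra.lift F _ _ (rep (1 : K) (one_pow 3) (dihM t ht)) x = 0 :=
    congrArg (fun z : Tgt F K => z.2.2 0) hx
  have m1 : MonoidAlgebra.lift F _ _ (rep t (ht3 ht) (dihM t ht)) x = 0 :=
    congrArg (fun z : Tgt F K => z.2.2 1) hx
  have m2 : MonoidAlgebra.lift F _ _ (rep t (ht3 ht) (dihM (t + 1) (ht' ht))) x = 0 :=
    congrArg (fun z : Tgt F K => z.2.2 2) hx
  rw [lift_rep] at e1 e2 m0 m1 m2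
  have e1 := dihE_eq _ e1
  have e2 := dihE_eq _ e2
  have m0 := dihM_eq _ _ _ m0
  have m1 := dihM_eq _ _ _ m1
  have m2 := dihM_eq _ _ _ m2
  have hv := lin' t ht _ e2.1 e2.2 m1 m2
  have hu1 : ∀ d, cf (1 : K) x d = algebraMap F K (cf (1 : F) x d) := by
    intro d; simp [cf]
  have hu := lin' t ht (fun d => cf (1 : K) x d)
    (by simp only [hu1, ← map_add]; rw [e1.1, map_zero])
    (by simp only [hu1, ← map_add]; rw [e1.2, map_zero]) m0 (by
      simp only [hu1] at m0 ⊢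
      obtain ⟨h1, h2, h3, h4⟩ := m0
      have h1 := congrArg σ h1
      have h2 := congrArg σ h2
      have h3 := congrArg σ h3
      have h4 := congrArg σ h4
      simp only [map_add, map_mul, hσ, AlgHom.commutes, map_zero] at h1 h2 h3 h4
      exact ⟨h1, h2, h3, h4⟩)
  have key : ∀ d, x.coeff (Multiplicative.ofAdd 0, d) = 0 ∧ x.coeff (Multiplicative.ofAdd 1, d) = 0 ∧
      x.coeff (Multiplicative.ofAdd 2, d) = 0 := by
    intro d
    have h1 := hu d
    have h2 := hv d
    have h3 := congrArg σ h2
    have hc := CharTwo.two_eq_zero (R := K)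
    simp only [cf, map_add, map_mul, map_pow, hσ, AlgHom.commutes, map_zero] at h1 h2 h3
    rw [← map_eq_zero (algebraMap F K), ← map_eq_zero (algebraMap F K), ← map_eq_zero (algebraMap F K)]
    generalize algebraMap F K (x.coeff (Multiplicative.ofAdd 0, d)) = a0 at *
    generalize algebraMap F K (x.coeff (Multiplicative.ofAdd 1, d)) = a1 at *
    generalize algebraMap F K (x.coeff (Multiplicative.ofAdd 2, d)) = a2 at *
    have q0 : a1 + a2 = 0 := by
      linear_combination h2 + h3 - hc * (a0 + a1 * t + a2 * t ^ 2 + a2 * t)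
    have q1 : a0 = 0 := by linear_combination h1 - q0
    have q2 : a1 = 0 := by
      linear_combination (-1) * h2 + q1 + q0 * t ^ 2 + a1 * ht - a1 * t ^ 2 * hc
    exact ⟨q1, q2, by linear_combination q0 - q2⟩
  ext ⟨i, d⟩
  obtain ⟨k0, k1, k2⟩ := key d
  have : ∀ i : ZMod 3, x.coeff (Multiplicative.ofAdd i, d) = 0 := by
    intro i; fin_cases i <;> assumption
  exact this i.toAdd

lemma Phi_bij [Finite F] (hK : Module.finrank F K = 2) (t : K) (ht : t ^ 2 + t + 1 = 0) (σ : K →ₐ[F] K) (hσ : σ t = t + 1) :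
    Function.Bijective (Phi F t ht) := by
  have : Module.Finite F K := Module.finite_of_finrank_pos (by omega)
  have : Finite K := Module.finite_of_finite F
  have : Finite (DualNumber F) := inferInstanceAs (Finite (F × F))
  have : Finite (DualNumber K) := inferInstanceAs (Finite (K × K))
  have cK : Nat.card K = Nat.card F ^ 2 := by rw [Module.natCard_eq_pow_finrank (K := F), hK]
  have c1 : Nat.card (MonoidAlgebra F G) = Nat.card F ^ 30 := by
    have e : MonoidAlgebra F G ≃ (G → F) := MonoidAlgebra.coeffEquiv.trans Finsupp.equivFunOnFinite
    rw [Nat.card_congr e, Nat.card_fun, Nat.card_prod, DihedralGroup.nat_card]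
    simp
  have : Finite (Tgt F K) := inferInstance
  refine (Nat.bijective_iff_injective_and_card _).2 ⟨Phi_inj t ht σ hσ, ?_⟩
  have d1 : Nat.card (DualNumber F) = Nat.card F ^ 2 := by
    rw [show Nat.card (DualNumber F) = Nat.card (F × F) from rfl, Nat.card_prod]; ring
  have d2 : Nat.card (DualNumber K) = Nat.card K ^ 2 := by
    rw [show Nat.card (DualNumber K) = Nat.card (K × K) from rfl, Nat.card_prod]; ring
  have d3 : Nat.card (Matrix (Fin 2) (Fin 2) K) = Nat.card K ^ 4 := by
    rw [show Nat.card (Matrix (Fin 2) (Fin 2) K) = Nat.card (Fin 2 → Fin 2 → K) from rfl]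
    simp [Nat.card_fun]; ring
  rw [c1, Nat.card_prod, Nat.card_prod, Nat.card_fun, d1, d2, d3, cK]
  simp; ring

/-- units of dual numbers -/
lemma dual_units (L : Type) [Field L] :
    Nonempty ((DualNumber L)ˣ ≃* Multiplicative L × Lˣ) := by
  let f : (DualNumber L)ˣ →* Multiplicative L × Lˣ :=
    { toFun := fun u => (Multiplicative.ofAdd ((u : DualNumber L).snd * (u : DualNumber L).fst⁻¹),
        Units.map (TrivSqZeroExt.fstHom L L L).toMonoidHom u)
      map_one' := by ext <;> simp
      map_mul' := by
        intro u v
        have hu : (u : DualNumber L).fst ≠ 0 :=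
          (TrivSqZeroExt.isUnit_iff_isUnit_fst.1 u.isUnit).ne_zero
        have hv : (v : DualNumber L).fst ≠ 0 :=
          (TrivSqZeroExt.isUnit_iff_isUnit_fst.1 v.isUnit).ne_zero
        refine Prod.ext ?_ (map_mul _ _ _)
        simp only [Prod.mk_mul_mk, ← ofAdd_add]
        congr 1
        simp
        field_simp
        ring }
  refine ⟨MulEquiv.ofBijective f ⟨?_, ?_⟩⟩
  · rw [injective_iff_map_eq_one]
    intro u hu
    have hu0 : (u : DualNumber L).fst ≠ 0 :=
      (TrivSqZeroExt.isUnit_iff_isUnit_fst.1 u.isUnit).ne_zero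
    have h1 : (u : DualNumber L).snd * (u : DualNumber L).fst⁻¹ = 0 := congrArg Prod.fst hu
    have h2 : (u : DualNumber L).fst = 1 := congrArg (fun z => ((z.2 : Lˣ) : L)) hu
    ext
    · simpa using h2
    · simpa [h2] using h1
  · rintro ⟨m, a⟩
    have : IsUnit (TrivSqZeroExt.inl (a : L) + TrivSqZeroExt.inr ((m.toAdd : L) * (a : L)) : DualNumber L) :=
      TrivSqZeroExt.isUnit_iff_isUnit_fst.2 (by simp)
    refine ⟨this.unit, ?_⟩
    refine Prod.ext ?_ ?_
    · simp [f]
    · ext; simp [f]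

end

end S9

/-- For `F` a finite field with `2^k` elements, `2^k ≡ 2, 8 (mod 15)`, `F₂` the quadratic
extension of `F`, and `G = C₃ × D₁₀`, the unit group of `FG` is isomorphic to
`C₂^(3k) ⋊ (C_{2^k-1} × C_{2^(2k)-1} × GL(2,F₂)³)`. -/
theorem stmt_9 (F : Type) [Field F] [Fintype F] (k : ℕ) (hk : 0 < k)
    (hchar : CharP F 2) (hcard : Fintype.card F = 2 ^ k)
    (hq : 2 ^ k % 15 = 2 ∨ 2 ^ k % 15 = 8)
    (K : Type) [Field K] [Algebra F K] (hK : Module.finrank F K = 2) :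
    let G := Multiplicative (ZMod 3) × DihedralGroup 5
    ∃ φ : (Multiplicative (ZMod (2 ^ k - 1)) × Multiplicative (ZMod (2 ^ (2 * k) - 1))
            × (Fin 3 → GL (Fin 2) K)) →*
          MulAut (Fin (3 * k) → Multiplicative (ZMod 2)),
      Nonempty ((MonoidAlgebra F G)ˣ ≃*
        (Fin (3 * k) → Multiplicative (ZMod 2)) ⋊[φ]
          (Multiplicative (ZMod (2 ^ k - 1)) × Multiplicative (ZMod (2 ^ (2 * k) - 1))
            × (Fin 3 → GL (Fin 2) K))) := by
  intro G
  have : Module.Finite F K := Module.finite_of_finrank_pos (by omega)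
  have : Finite K := Module.finite_of_finite F
  have cF : Nat.card F = 2 ^ k := by rw [Nat.card_eq_fintype_card, hcard]
  have cK : Nat.card K = 2 ^ (2 * k) := by
    rw [Module.natCard_eq_pow_finrank (K := F), hK, cF]; ring
  have : CharP K 2 := charP_of_injective_algebraMap (algebraMap F K).injective 2
  have h2 := CharTwo.two_eq_zero (R := K)
  have hF3 : 2 ^ k % 3 = 2 := by omega
  have hK3 : 3 ∣ Nat.card Kˣ := by
    rw [Nat.card_units, cK, mul_comm, pow_mul]
    obtain ⟨m, hm⟩ : ∃ m, 2 ^ k = 3 * m + 2 := ⟨2 ^ k / 3, by omega⟩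
    rw [hm]
    exact ⟨3 * m ^ 2 + 4 * m + 1, by rw [Nat.sub_eq_iff_eq_add (by nlinarith)]; ring⟩
  haveI : Fact (Nat.Prime 3) := ⟨Nat.prime_three⟩
  obtain ⟨u, hu⟩ := exists_prime_orderOf_dvd_card' 3 hK3
  have hu3 : (u : K) ^ 3 = 1 := by
    rw [← Units.val_pow_eq_pow_val, ← hu, pow_orderOf_eq_one]; rfl
  have hu1 : (u : K) - 1 ≠ 0 := by
    intro h
    have : u = 1 := by ext; simpa [sub_eq_zero] using h
    rw [this] at hu; simp at hu
  obtain ⟨t, ht, ht3⟩ : ∃ t : K, t ^ 2 + t + 1 = 0 ∧ t ^ 3 = 1 :=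
    ⟨u, by
      have : ((u : K) - 1) * ((u : K) ^ 2 + u + 1) = 0 := by linear_combination hu3
      exact (mul_eq_zero.1 this).resolve_left hu1, hu3⟩
  have hσ : FiniteField.frobeniusAlgHom F K t = t + 1 := by
    rw [FiniteField.frobeniusAlgHom_apply, hcard, pow_eq_pow_mod _ ht3, hF3]
    linear_combination ht - (t + 1) * h2
  let e0 : MonoidAlgebra F G ≃+* S9.Tgt F K :=
    RingEquiv.ofBijective _ (S9.Phi_bij hK t ht _ hσ)
  obtain ⟨eF⟩ := S9.dual_units F
  obtain ⟨eK⟩ := S9.dual_units K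
  let e1 : (MonoidAlgebra F G)ˣ ≃* (DualNumber F)ˣ × (DualNumber K)ˣ × (Fin 3 → GL (Fin 2) K) :=
    (Units.mapEquiv e0.toMulEquiv).trans <| MulEquiv.prodUnits.trans <|
      (MulEquiv.refl _).prodCongr <| MulEquiv.prodUnits.trans <|
        (MulEquiv.refl _).prodCongr MulEquiv.piUnits
  have c1 : Nonempty (Fˣ ≃* Multiplicative (ZMod (2 ^ k - 1))) := by
    refine ⟨mulEquivOfCyclicCardEq ?_⟩
    rw [Nat.card_units, cF, Nat.card_congr Multiplicative.toAdd, Nat.card_zmod]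
  have c2 : Nonempty (Kˣ ≃* Multiplicative (ZMod (2 ^ (2 * k) - 1))) := by
    refine ⟨mulEquivOfCyclicCardEq ?_⟩
    rw [Nat.card_units, cK, Nat.card_congr Multiplicative.toAdd, Nat.card_zmod]
  have c3 : Nonempty (Multiplicative F × Multiplicative K ≃* (Fin (3 * k) → Multiplicative (ZMod 2))) := by
    letI := ZMod.algebra F 2
    letI := ZMod.algebra K 2
    haveI : Fact (Nat.Prime 2) := ⟨Nat.prime_two⟩
    have hfin : Module.finrank (ZMod 2) (F × K) = Module.finrank (ZMod 2) (Fin (3 * k) → ZMod 2) := by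
      have := Module.natCard_eq_pow_finrank (K := ZMod 2) (V := F × K)
      rw [Nat.card_prod, cF, cK, ← pow_add, Nat.card_zmod] at this
      have := Nat.pow_right_injective le_rfl this
      rw [← this]; simp; ring
    let l : (F × K) ≃ₗ[ZMod 2] (Fin (3 * k) → ZMod 2) := LinearEquiv.ofFinrankEq _ _ hfin
    exact ⟨{ toFun := fun p => fun i => Multiplicative.ofAdd (l (p.1.toAdd, p.2.toAdd) i)
             invFun := fun f => (Multiplicative.ofAdd (l.symm (fun i => (f i).toAdd)).1,
                Multiplicative.ofAdd (l.symm (fun i => (f i).toAdd)).2)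
             left_inv := fun p => by simp
             right_inv := fun p => by simp
             map_mul' := fun p q => by
               funext i
               simp only [Prod.fst_mul, Prod.snd_mul, toAdd_mul, Pi.mul_apply, ← ofAdd_add]
               rw [← Prod.mk_add_mk, map_add]; rfl }⟩
  obtain ⟨c1⟩ := c1
  obtain ⟨c2⟩ := c2
  obtain ⟨c3⟩ := c3
  let e2 : ∀ (A B C D E : Type) [CommGroup A] [CommGroup B] [CommGroup C] [CommGroup D] [Group E],
      (A × B) × (C × D) × E ≃* (A × C) × (B × D × E) := fun A B C D E _ _ _ _ _ =>
    { toFun := fun p => ((p.1.1, p.2.1.1), (p.1.2, p.2.1.2, p.2.2))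
      invFun := fun p => ((p.1.1, p.2.1), (p.1.2, p.2.2.1), p.2.2.2)
      left_inv := fun p => rfl
      right_inv := fun p => rfl
      map_mul' := fun p q => rfl }
  exact ⟨1, ⟨e1.trans <| (eF.prodCongr (eK.prodCongr (MulEquiv.refl _))).trans <|
    (e2 _ _ _ _ _).trans <| (c3.prodCongr (c1.prodCongr (c2.prodCongr (MulEquiv.refl _)))).trans
      SemidirectProduct.mulEquivProd.symm⟩⟩
end

section
/- Let F be a finite field with 5^k elements and G = C_3 × D_10. Then the center of the group V = 1 + J(FG) is an elementary abelian 5-group of order 5^{9k}, i.e., Z(V) ≅ C_5^{9k}. -/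
namespace Z5
abbrev G := Multiplicative (ZMod 3) × DihedralGroup 5
open DihedralGroup MonoidAlgebra

section
variable (F : Type) [Field F]

noncomputable def rho : MonoidAlgebra F G := single (1, r 1) 1
noncomputable def sg : MonoidAlgebra F G := single (1, sr 0) 1

def K (z : MonoidAlgebra F G) : Prop :=
  ∀ c, (∑ i, z.coeff (c, r i) = 0) ∧ (∑ i, z.coeff (c, sr i) = 0)

lemma rho_pow5 : rho F ^ 5 = 1 := by
  rw [rho, single_pow, one_pow]; rfl

lemma rho_sub_pow5 [CharP F 5] : (rho F - 1) ^ 5 = 0 := by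
  have : Fact (Nat.Prime 5) := ⟨by norm_num⟩
  have : CharP (MonoidAlgebra F G) 5 := charP_of_injective_algebraMap (algebraMap F (MonoidAlgebra F G)).injective 5
  rw [sub_pow_char_of_commute (p := 5) (Commute.one_right _), rho_pow5]; simp

lemma normal (y : MonoidAlgebra F G) : ∃ y', (rho F - 1) * y = y' * (rho F - 1) := by
  induction y using MonoidAlgebra.induction_linear with
  | zero => exact ⟨0, by simp⟩
  | add f g hf hg =>
    obtain ⟨a, ha⟩ := hf
    obtain ⟨b, hb⟩ := hg
    exact ⟨a + b, by rw [mul_add, add_mul, ha, hb]⟩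
  | single g a =>
    obtain ⟨c, i | i⟩ := g
    · refine ⟨single (c, r i) a, ?_⟩
      simp [rho, sub_mul, mul_sub, single_mul_single, add_comm]
    · refine ⟨- single (c, sr (i-1)) a, ?_⟩
      simp [rho, sub_mul, mul_sub, single_mul_single]
      abel

lemma pow_eq (y : MonoidAlgebra F G) (n : ℕ) : ∃ y', (y * (rho F - 1)) ^ n = y' * (rho F - 1) ^ n := by
  induction n with
  | zero => exact ⟨1, by simp⟩
  | succ n ih =>
    obtain ⟨a, ha⟩ := ih
    have h2 : ∀ m : ℕ, ∀ y, ∃ y', (rho F - 1) ^ m * y = y' * (rho F - 1) ^ m := by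
      intro m
      induction m with
      | zero => exact fun y => ⟨y, by simp⟩
      | succ m ih =>
        intro y
        obtain ⟨b, hb⟩ := normal F y
        obtain ⟨c, hc⟩ := ih b
        exact ⟨c, by rw [pow_succ, mul_assoc, hb, ← mul_assoc, hc, mul_assoc, ← pow_succ]⟩
    obtain ⟨b, hb⟩ := h2 n y
    refine ⟨a * b, ?_⟩
    rw [pow_succ, ha, mul_assoc, ← mul_assoc (_ ^ n), hb, mul_assoc, mul_assoc, ← pow_succ]

lemma pow5_zero [CharP F 5] (y : MonoidAlgebra F G) : (y * (rho F - 1)) ^ 5 = 0 := by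
  obtain ⟨a, ha⟩ := pow_eq F y 5
  rw [ha, rho_sub_pow5, mul_zero]

lemma rho_mem [CharP F 5] : rho F - 1 ∈ Ideal.jacobson (⊥ : Ideal (MonoidAlgebra F G)) := by
  rw [Ideal.mem_jacobson_iff]
  intro y
  have h : IsUnit (y * (rho F - 1) + 1) := IsNilpotent.isUnit_add_one ⟨5, pow5_zero F y⟩
  obtain ⟨u, hu⟩ := h
  refine ⟨↑u⁻¹, ?_⟩
  have : (↑u⁻¹ : MonoidAlgebra F G) * (y * (rho F - 1) + 1) = 1 := by rw [← hu]; simp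
  rw [mul_add, mul_one, ← mul_assoc] at this
  simp [this]

lemma exists_of_K (z : MonoidAlgebra F G) (hz : K F z) : ∃ y, z = y * (rho F - 1) := by
  let f : (ZMod 5 → F) → ZMod 5 → F := fun a i =>
    (![0, - a 1, - a 1 - a 2, - a 1 - a 2 - a 3, - a 1 - a 2 - a 3 - a 4] : Fin 5 → F) i
  have key : ∀ a : ZMod 5 → F, ∑ i, a i = 0 → ∀ i, a i = f a (i - 1) - f a i := by
    intro a ha i
    have h5 : a 0 + a 1 + a 2 + a 3 + a 4 = 0 := by
      rw [← ha]; exact (Fin.sum_univ_five (M := F) a).symm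
    fin_cases i
    · change a 0 = (- a 1 - a 2 - a 3 - a 4) - 0
      linear_combination h5
    · change a 1 = 0 - (- a 1); ring
    · change a 2 = (- a 1) - (- a 1 - a 2); ring
    · change a 3 = (- a 1 - a 2) - (- a 1 - a 2 - a 3); ring
    · change a 4 = (- a 1 - a 2 - a 3) - (- a 1 - a 2 - a 3 - a 4); ring
  refine ⟨ofCoeff (Finsupp.equivFunOnFinite.symm fun g => match g with
    | (c, r i) => f (fun j => z.coeff (c, r j)) i
    | (c, sr i) => f (fun j => z.coeff (c, sr j)) i), ?_⟩
  ext ⟨c, i | i⟩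
  · rw [key _ (hz c).1 i, mul_sub, mul_one, rho, coeff_sub, Finsupp.sub_apply, coeff_mul_single_apply]
    simp [sub_eq_add_neg]
  · rw [key _ (hz c).2 i, mul_sub, mul_one, rho, coeff_sub, Finsupp.sub_apply, coeff_mul_single_apply]
    simp [sub_eq_add_neg]

def toC2 : DihedralGroup 5 →* Multiplicative (ZMod 2) where
  toFun g := match g with
    | r _ => 1
    | sr _ => Multiplicative.ofAdd 1
  map_one' := rfl
  map_mul' := by decide

def q : G →* Multiplicative (ZMod 3) × Multiplicative (ZMod 2) := (MonoidHom.id _).prodMap toC2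

lemma q_surj : Function.Surjective q := by
  rintro ⟨c, d⟩
  have : d = 1 ∨ d = Multiplicative.ofAdd 1 := by revert d; decide
  rcases this with rfl | rfl
  · exact ⟨(c, r 0), rfl⟩
  · exact ⟨(c, sr 0), rfl⟩

lemma K_of_mem [CharP F 5] (z : MonoidAlgebra F G)
    (hz : z ∈ Ideal.jacobson (⊥ : Ideal (MonoidAlgebra F G))) : K F z := by
  have hs : Function.Surjective (mapDomainRingHom F q) := by
    intro y
    induction y using MonoidAlgebra.induction_linear with
    | zero => exact ⟨0, by simp⟩
    | add f g hf hg =>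
      obtain ⟨a, ha⟩ := hf
      obtain ⟨b, hb⟩ := hg
      exact ⟨a + b, by rw [map_add, ha, hb]⟩
    | single g a =>
      obtain ⟨h, rfl⟩ := q_surj g
      exact ⟨single h a, by simp⟩
  have : RingHomSurjective (mapDomainRingHom F q) := ⟨hs⟩
  have : NeZero (Nat.card (Multiplicative (ZMod 3) × Multiplicative (ZMod 2)) : F) := by
    refine ⟨?_⟩
    have : Nat.card (Multiplicative (ZMod 3) × Multiplicative (ZMod 2)) = 6 := by
      rw [Nat.card_eq_fintype_card]; rfl
    rw [this, Ne, CharP.cast_eq_zero_iff F 5]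
    norm_num
  have : IsSemisimpleRing (MonoidAlgebra F (Multiplicative (ZMod 3) × Multiplicative (ZMod 2))) :=
    inferInstance
  rw [Ideal.jacobson_bot] at hz
  have h1 := Ring.le_comap_jacobson (mapDomainRingHom F q) hz
  rw [Ideal.mem_comap, IsSemisimpleRing.jacobson_eq_bot, Ideal.mem_bot] at h1
  have hsum : z = ∑ g, single g (z.coeff g) := by
    ext g
    simp [coeff_sum]
  have h2 : ∀ d, ∑ g : G, (if q g = d then z.coeff g else 0) = 0 := by
    intro d
    have := congrArg (fun w => w.coeff d) h1
    rw [hsum] at this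
    simpa [coeff_sum, Finsupp.finsetSum_apply, Finsupp.single_apply] using this
  let e : ZMod 5 ⊕ ZMod 5 ≃ DihedralGroup 5 :=
    { toFun := fun s => s.elim r sr
      invFun := fun g => match g with
        | r i => Sum.inl i
        | sr i => Sum.inr i
      left_inv := by rintro (i | i) <;> rfl
      right_inv := by rintro (i | i) <;> rfl }
  have h3 : ∀ c (d : Multiplicative (ZMod 2)), ∑ g : DihedralGroup 5, (if toC2 g = d then z.coeff (c, g) else 0) = 0 := by
    intro c d
    refine Eq.trans ?_ (h2 (c, d))
    rw [Fintype.sum_prod_type, Finset.sum_eq_single c]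
    · simp only [q, MonoidHom.prodMap_def, MonoidHom.prod_apply, Prod.mk.injEq]; simp
    · intro b _ hb
      simp [q, hb]
    · simp
  intro c
  have t1 : ∀ i, toC2 (r i) = 1 := fun _ => rfl
  have t2 : ∀ i, toC2 (sr i) = Multiplicative.ofAdd 1 := fun _ => rfl
  have a1 := h3 c 1
  have a2 := h3 c (Multiplicative.ofAdd 1)
  rw [← e.sum_comp, Fintype.sum_sum_type] at a1 a2
  constructor
  · simpa [e, t1, t2] using a1
  · have t3 : (1 : Multiplicative (ZMod 2)) ≠ Multiplicative.ofAdd 1 := by decide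
    simpa [e, t1, t2, t3] using a2

lemma mem_iff [CharP F 5] (z : MonoidAlgebra F G) :
    z ∈ Ideal.jacobson (⊥ : Ideal (MonoidAlgebra F G)) ↔ K F z := by
  refine ⟨K_of_mem F z, fun h => ?_⟩
  obtain ⟨y, rfl⟩ := exists_of_K F z h
  exact Ideal.mul_mem_left _ _ (rho_mem F)

/-- The family of central elements. -/
noncomputable def Psi (p : Multiplicative (ZMod 3) → F × F × F) : MonoidAlgebra F G :=
  ofCoeff (Finsupp.equivFunOnFinite.symm fun g => match g with
    | (c, r i) => (![-2 * (p c).1 - 2 * (p c).2.1, (p c).1, (p c).2.1, (p c).2.1, (p c).1] :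
        Fin 5 → F) i
    | (c, sr _) => (p c).2.2)

lemma Psi_inj : Function.Injective (Psi F) := by
  intro p p' h
  funext c
  have h1 : (Psi F p).coeff (c, r 1) = (Psi F p').coeff (c, r 1) := by rw [h]
  have h2 : (Psi F p).coeff (c, r 2) = (Psi F p').coeff (c, r 2) := by rw [h]
  have h3 : (Psi F p).coeff (c, sr 0) = (Psi F p').coeff (c, sr 0) := by rw [h]
  exact Prod.ext h1 (Prod.ext h2 h3)

lemma Psi_neg (p c i) : (Psi F p).coeff (c, r (-i)) = (Psi F p).coeff (c, r i) := by
  fin_cases i <;> rfl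

lemma Psi_sr (p c i) : (Psi F p).coeff (c, sr i) = (p c).2.2 := rfl

lemma Psi_K [CharP F 5] (p) : K F (Psi F p) := by
  have h5 : (5 : F) = 0 := by exact_mod_cast CharP.cast_eq_zero F 5
  intro c
  constructor
  · refine (Fin.sum_univ_five (M := F) _).trans ?_
    change (-2 * (p c).1 - 2 * (p c).2.1) + (p c).1 + (p c).2.1 + (p c).2.1 + (p c).1 = 0
    ring
  · simp only [Psi_sr]
    simp [h5]

lemma Psi_comm_r (p c i) : Commute (Psi F p) (single (c, r i) 1) := by
  ext ⟨d, j | j⟩ <;>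
  simp [coeff_mul_single_apply, coeff_single_mul_apply, Psi_sr, mul_comm, add_comm]

lemma Psi_comm_t (p) : Commute (Psi F p) (sg F * (rho F - 1)) := by
  have : sg F * (rho F - 1) = single (1, sr 1) 1 - single (1, sr 0) 1 := by
    simp [sg, rho, mul_sub, single_mul_single]
  rw [this, commute_iff_eq, mul_sub, sub_mul]
  ext ⟨d, j | j⟩
  · simp [coeff_mul_single_apply, coeff_single_mul_apply, Psi_sr]
  · have h1 := Psi_neg F p d (j - 1)
    have h2 := Psi_neg F p d j
    rw [neg_sub] at h1
    simp [coeff_mul_single_apply, coeff_single_mul_apply, h1, h2]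

lemma Psi_comm (p) (y : MonoidAlgebra F G) : Commute (Psi F p) (y * (rho F - 1)) := by
  induction y using MonoidAlgebra.induction_linear with
  | zero => simp
  | add f g hf hg => rw [add_mul]; exact hf.add_right hg
  | single g a =>
    have h0 : single g a = a • (single g 1 : MonoidAlgebra F G) := by simp
    rw [h0, smul_mul_assoc]
    refine Commute.smul_right ?_ a
    obtain ⟨c, i | i⟩ := g
    · exact (Psi_comm_r F p c i).mul_right ((Psi_comm_r F p 1 1).sub_right (Commute.one_right _))
    · have : (single (c, sr i) 1 : MonoidAlgebra F G) = single (c, r (-i)) 1 * sg F := by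
        simp [sg, single_mul_single]
      rw [this, mul_assoc]
      exact (Psi_comm_r F p c (-i)).mul_right (Psi_comm_t F p)

lemma exists_Psi (z : MonoidAlgebra F G) (hK : K F z) (h1 : Commute z (rho F - 1))
    (h2 : Commute z (sg F * (rho F - 1))) : ∃ p, Psi F p = z := by
  have h1' : z * rho F = rho F * z := by
    have := h1.eq
    rw [mul_sub, sub_mul, mul_one, one_mul] at this
    exact sub_left_injective this
  have hb : ∀ c j, z.coeff (c, sr (j - 1)) = z.coeff (c, sr (j + 1)) := by
    intro c j
    have := congrArg (fun w => w.coeff (c, sr j)) h1'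
    simpa [rho, coeff_mul_single_apply, coeff_single_mul_apply, sub_eq_add_neg] using this
  have ht : sg F * (rho F - 1) = single (1, sr 1) 1 - single (1, sr 0) 1 := by
    simp [sg, rho, mul_sub, single_mul_single]
  have ha : ∀ c j, z.coeff (c, r (1 - j)) - z.coeff (c, r (-j)) =
      z.coeff (c, r (j - 1)) - z.coeff (c, r j) := by
    intro c j
    have := h2.eq
    rw [ht, mul_sub, sub_mul] at this
    have := congrArg (fun w => w.coeff (c, sr j)) this
    simpa [coeff_mul_single_apply, coeff_single_mul_apply] using this
  refine ⟨fun c => (z.coeff (c, r 1), z.coeff (c, r 2), z.coeff (c, sr 0)), ?_⟩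
  ext ⟨c, i | i⟩
  · have hs : z.coeff (c, r 0) + z.coeff (c, r 1) + z.coeff (c, r 2) + z.coeff (c, r 3)
        + z.coeff (c, r 4) = 0 := by
      rw [← (hK c).1]; exact (Fin.sum_univ_five (M := F) (fun i => z.coeff (c, r i))).symm
    have a1 : z.coeff (c, r 0) - z.coeff (c, r 4) = z.coeff (c, r 0) - z.coeff (c, r 1) := ha c 1
    have a2 : z.coeff (c, r 4) - z.coeff (c, r 3) = z.coeff (c, r 1) - z.coeff (c, r 2) := ha c 2
    have e4 : z.coeff (c, r 4) = z.coeff (c, r 1) := by linear_combination -a1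
    have e3 : z.coeff (c, r 3) = z.coeff (c, r 2) := by linear_combination e4 - a2
    fin_cases i
    · change -2 * z.coeff (c, r 1) - 2 * z.coeff (c, r 2) = z.coeff (c, r 0)
      linear_combination e3 + e4 - hs
    · rfl
    · rfl
    · exact e3.symm
    · exact e4.symm
  · rw [Psi_sr]
    have b1 : z.coeff (c, sr 0) = z.coeff (c, sr 2) := hb c 1
    have b2 : z.coeff (c, sr 2) = z.coeff (c, sr 4) := hb c 3
    have b3 : z.coeff (c, sr 4) = z.coeff (c, sr 1) := hb c 0
    have b4 : z.coeff (c, sr 1) = z.coeff (c, sr 3) := hb c 2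
    fin_cases i
    · rfl
    · exact b1.trans (b2.trans b3)
    · exact b1
    · exact b1.trans (b2.trans (b3.trans b4))
    · exact b1.trans b2

end

lemma elem_ab (A : Type) [CommGroup A] [Finite A] (n : ℕ) (h : ∀ x : A, x ^ 5 = 1)
    (hc : Nat.card A = 5 ^ n) : Nonempty (A ≃* (Fin n → Multiplicative (ZMod 5))) := by
  have : Fact (Nat.Prime 5) := ⟨by norm_num⟩
  let : Module (ZMod 5) (Additive A) := AddCommGroup.zmodModule (n := 5) (fun x => h x.toMul)
  have hfin : Module.Finite (ZMod 5) (Additive A) := Module.Finite.of_finite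
  have h1 : Nat.card (Additive A) = 5 ^ Module.finrank (ZMod 5) (Additive A) := by
    have := Module.natCard_eq_pow_finrank (K := ZMod 5) (V := Additive A)
    simpa using this
  have h2 : Module.finrank (ZMod 5) (Additive A) = n :=
    Nat.pow_right_injective (le_refl 2 |>.trans (by norm_num)) (h1.symm.trans hc)
  have e := LinearEquiv.ofFinrankEq (R := ZMod 5) (Additive A) (Fin n → ZMod 5) (by simp [h2])
  exact ⟨{ toFun := fun a i => Multiplicative.ofAdd (e (Additive.ofMul a) i)
           invFun := fun f => (e.symm fun i => (f i).toAdd).toMul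
           left_inv := fun a => by simp
           right_inv := fun f => by simp
           map_mul' := fun a b => by
             funext i
             simp }⟩

theorem main (F : Type) [Field F] [Fintype F] (k : ℕ) (hk : 0 < k)
    (hchar : CharP F 5) (hcard : Fintype.card F = 5 ^ k) :
    ∃ H : Subgroup (MonoidAlgebra F G)ˣ,
      (∀ u : (MonoidAlgebra F G)ˣ,
        u ∈ H ↔ (u : MonoidAlgebra F G) - 1 ∈ Ideal.jacobson (⊥ : Ideal (MonoidAlgebra F G))) ∧
      Nonempty (Subgroup.center H ≃* (Fin (9 * k) → Multiplicative (ZMod 5))) := by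
  have : Fact (Nat.Prime 5) := ⟨by norm_num⟩
  have hcp : CharP (MonoidAlgebra F G) 5 :=
    charP_of_injective_algebraMap (algebraMap F (MonoidAlgebra F G)).injective 5
  let J := Ideal.jacobson (⊥ : Ideal (MonoidAlgebra F G))
  let H : Subgroup (MonoidAlgebra F G)ˣ :=
    { carrier := {u | (u : MonoidAlgebra F G) - 1 ∈ J}
      one_mem' := by simp
      mul_mem' := by
        intro a b ha hb
        have : ((a * b : (MonoidAlgebra F G)ˣ) : MonoidAlgebra F G) - 1
          = a * ((b : MonoidAlgebra F G) - 1) + ((a : MonoidAlgebra F G) - 1) := by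
          push_cast; noncomm_ring
        change _ ∈ J
        rw [this]
        exact J.add_mem (J.mul_mem_left _ hb) ha
      inv_mem' := by
        intro a ha
        have : ((a⁻¹ : (MonoidAlgebra F G)ˣ) : MonoidAlgebra F G) - 1
          = -((a⁻¹ : (MonoidAlgebra F G)ˣ) : MonoidAlgebra F G) * ((a : MonoidAlgebra F G) - 1) := by
          simp [mul_sub]
          abel
        change _ ∈ J
        rw [this]
        exact J.mul_mem_left _ ha }
  have hH : ∀ u : (MonoidAlgebra F G)ˣ, u ∈ H ↔ (u : MonoidAlgebra F G) - 1 ∈ J := fun _ => Iff.rfl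
  have hform : ∀ z ∈ J, ∃ y, z = y * (rho F - 1) :=
    fun z hz => exists_of_K F z ((mem_iff F z).1 hz)
  have hnil : ∀ z ∈ J, z ^ 5 = 0 := by
    intro z hz
    obtain ⟨y, rfl⟩ := hform z hz
    exact pow5_zero F y
  have hlift : ∀ z ∈ J, ∃ u : H, ((u : (MonoidAlgebra F G)ˣ) : MonoidAlgebra F G) = z + 1 := by
    intro z hz
    obtain ⟨u, hu⟩ : IsUnit (z + 1) := IsNilpotent.isUnit_add_one ⟨5, hnil z hz⟩
    refine ⟨⟨u, ?_⟩, hu⟩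
    rw [hH, hu, add_sub_cancel_right]
    exact hz
  refine ⟨H, hH, ?_⟩
  have hcen : ∀ u : H, u ∈ Subgroup.center H ↔
      ∃ p, Psi F p + 1 = ((u : (MonoidAlgebra F G)ˣ) : MonoidAlgebra F G) := by
    intro u
    rw [Subgroup.mem_center_iff]
    constructor
    · intro h
      have hc : ∀ z ∈ J, Commute (((u : (MonoidAlgebra F G)ˣ) : MonoidAlgebra F G) - 1) z := by
        intro z hz
        obtain ⟨v, hv⟩ := hlift z hz
        have h1 := congrArg (fun w : H => ((w : (MonoidAlgebra F G)ˣ) : MonoidAlgebra F G)) (h v)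
        have h2 : Commute ((u : (MonoidAlgebra F G)ˣ) : MonoidAlgebra F G) (z + 1) := by
          rw [← hv]; exact h1.symm
        have h3 := (h2.sub_right (Commute.one_right _)).sub_left (Commute.one_left _)
        rwa [add_sub_cancel_right] at h3
      obtain ⟨p, hp⟩ := exists_Psi F _ ((mem_iff F _).1 ((hH u).1 u.2)) (hc _ (rho_mem F))
        (hc _ (J.mul_mem_left _ (rho_mem F)))
      exact ⟨p, by rw [hp, sub_add_cancel]⟩
    · rintro ⟨p, hp⟩ v
      apply Subtype.ext
      apply Units.ext
      change ((v : (MonoidAlgebra F G)ˣ) : MonoidAlgebra F G) * ((u : (MonoidAlgebra F G)ˣ) : MonoidAlgebra F G) = ((u : (MonoidAlgebra F G)ˣ) : MonoidAlgebra F G) * ((v : (MonoidAlgebra F G)ˣ) : MonoidAlgebra F G)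
      rw [← hp]
      obtain ⟨y, hy⟩ := hform _ ((hH v).1 v.2)
      have h1 := Psi_comm F p y
      rw [← hy] at h1
      have h2 := (h1.add_left (Commute.one_left _)).add_right (Commute.one_right _)
      rw [sub_add_cancel] at h2
      exact h2.eq.symm
  have hpJ : ∀ p, Psi F p ∈ J := fun p => (mem_iff F _).2 (Psi_K F p)
  choose U hU using fun p => hlift (Psi F p) (hpJ p)
  have hbij : Function.Bijective
      (fun p => (⟨U p, (hcen _).2 ⟨p, (hU p).symm⟩⟩ : Subgroup.center H)) := by
    constructor
    · intro p p' h
      have h1 : U p = U p' := congrArg Subtype.val h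
      apply Psi_inj F
      have h2 := hU p
      rw [h1, hU p'] at h2
      exact (add_right_cancel h2).symm
    · rintro ⟨u, hu⟩
      obtain ⟨p, hp⟩ := (hcen u).1 hu
      refine ⟨p, ?_⟩
      apply Subtype.ext
      apply Subtype.ext
      apply Units.ext
      exact (hU p).trans hp
  have hfin : Finite (Subgroup.center H) := Finite.of_surjective _ hbij.2
  let : CommGroup (Subgroup.center H) :=
    { (inferInstance : Group (Subgroup.center H)) with
      mul_comm := fun a b => Subtype.ext (Subgroup.mem_center_iff.1 b.2 a.1) }
  refine elem_ab (Subgroup.center H) (9 * k) ?_ ?_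
  · rintro ⟨u, hu⟩
    apply Subtype.ext
    apply Subtype.ext
    apply Units.ext
    change ((u : (MonoidAlgebra F G)ˣ) : MonoidAlgebra F G) ^ 5 = 1
    obtain ⟨p, hp⟩ := (hcen u).1 hu
    rw [← hp, add_pow_char_of_commute (p := 5) (Commute.one_right _), hnil _ (hpJ p)]
    simp
  · rw [← Nat.card_eq_of_bijective _ hbij, Nat.card_eq_fintype_card]
    simp only [Fintype.card_pi, Fintype.card_prod, hcard, Finset.prod_const, Finset.card_univ]
    change (5 ^ k * (5 ^ k * 5 ^ k)) ^ 3 = _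
    ring

end Z5

/-- For `F` a finite field with `5^k` elements and `G = C₃ × D₁₀`, the center of the group
`V = 1 + J(FG)` is elementary abelian of order `5^(9k)`, i.e. `Z(V) ≅ C₅^(9k)`. -/
theorem stmt_13 (F : Type) [Field F] [Fintype F] (k : ℕ) (hk : 0 < k)
    (hchar : CharP F 5) (hcard : Fintype.card F = 5 ^ k) :
    let G := Multiplicative (ZMod 3) × DihedralGroup 5
    ∃ H : Subgroup (MonoidAlgebra F G)ˣ,
      (∀ u : (MonoidAlgebra F G)ˣ,
        u ∈ H ↔ (u : MonoidAlgebra F G) - 1 ∈ Ideal.jacobson (⊥ : Ideal (MonoidAlgebra F G))) ∧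
      Nonempty (Subgroup.center H ≃* (Fin (9 * k) → Multiplicative (ZMod 5))) := by
  exact Z5.main F k hk hchar hcard
end
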